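/- arXiv:1905.03177 — 7 statements merged into one kernel-verified Lean document; each statement's English description precedes it below -/
import Mathlib

section
/- Let S ⊆ ℝ^d × {−1,+1} be a finite training set with X₊ and X₋ nonempty, and let S' ⊆ ℝ^d × {−1,+1} be any artificial data set. If |S'| < d+1, then the worst-case margin satisfies α(S,S') ≤ 0; that is, either S ∪ S' is not linearly separable, or there exists a linear separator of S ∪ S' whose margin on S is at most 0. -/
open scoped RealInnerProductSpace ENNReal Classical
open Metric Set MeasureTheory

noncomputable section

/-- `ℝ^d` with the Euclidean (ℓ²) structure. -/
abbrev Euc (d : ℕ) := EuclideanSpace ℝ (Fin d)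

/-- `X₊`: the set of points of `T` with label `1`. -/
def posPts {d : ℕ} (T : Set (Euc d × ℝ)) : Set (Euc d) := {x | (x, (1 : ℝ)) ∈ T}

/-- `X₋`: the set of points of `T` with label `-1`. -/
def negPts {d : ℕ} (T : Set (Euc d × ℝ)) : Set (Euc d) := {x | (x, (-1 : ℝ)) ∈ T}

/-- All labels in `T` are `±1`, i.e. `T ⊆ ℝ^d × {-1, +1}`. -/
def LabelsPM {d : ℕ} (T : Set (Euc d × ℝ)) : Prop := ∀ p ∈ T, p.2 = 1 ∨ p.2 = -1

/-- `(w, b)` is a linear separator of the labeled set `T`: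
`w ≠ 0` and `y(⟨w,x⟩ + b) ≥ 0` for all `(x,y) ∈ T`. -/
def IsLinSep {d : ℕ} (w : Euc d) (b : ℝ) (T : Set (Euc d × ℝ)) : Prop :=
  w ≠ 0 ∧ ∀ p ∈ T, p.2 * (⟪w, p.1⟫ + b) ≥ 0

/-- The hyperplane `H = {x | ⟨w,x⟩ + b = 0}` associated with `(w, b)`. -/
def hyperplane {d : ℕ} (w : Euc d) (b : ℝ) : Set (Euc d) := {x | ⟪w, x⟫ + b = 0}

/-- The margin `γ_{(w,b)}(S)`: infimum over `(x,y) ∈ S` of the distance from `x`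
to the hyperplane of `(w,b)`. -/
def linMargin {d : ℕ} (S : Set (Euc d × ℝ)) (w : Euc d) (b : ℝ) : ℝ :=
  ⨅ p : S, Metric.infDist (p : Euc d × ℝ).1 (hyperplane w b)

/-- `γ` is the max-margin of `S`: attained by some linear separator of `S`, and an upper
bound on the margin of every linear separator of `S`. -/
def IsMaxMargin {d : ℕ} (S : Set (Euc d × ℝ)) (γ : ℝ) : Prop :=
  (∃ w b, IsLinSep w b S ∧ linMargin S w b = γ) ∧
    ∀ w b, IsLinSep w b S → linMargin S w b ≤ γ

/-- The worst-case margin `α(S,S')` (an extended real): the infimum over all linear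
separators of `S ∪ S'` of their margin on `S`, or `-∞` if no separator exists. -/
def alpha {d : ℕ} (S S' : Set (Euc d × ℝ)) : EReal :=
  if ∃ w b, IsLinSep w b (S ∪ S') then
    sInf {m : EReal | ∃ w b, IsLinSep w b (S ∪ S') ∧ m = ((linMargin S w b : ℝ) : EReal)}
  else ⊥

/-- `S_r`: the set of labeled points obtained by moving a point of `S` by distance at
most `r`, keeping its label; i.e. `((X₊)_r × {1}) ∪ ((X₋)_r × {-1})`. -/
def ballAug {d : ℕ} (S : Set (Euc d × ℝ)) (r : ℝ) : Set (Euc d × ℝ) :=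
  {p | (p.2 = 1 ∧ Metric.infDist p.1 (posPts S) ≤ r) ∨
       (p.2 = -1 ∧ Metric.infDist p.1 (negPts S) ≤ r)}

/-- A `{±1}`-valued classifier. -/
def IsClassifier {d : ℕ} (f : Euc d → ℝ) : Prop := ∀ x, f x = 1 ∨ f x = -1

/-- `f` separates the labeled set `T`: `f x = y` for all `(x,y) ∈ T`. -/
def Separates {d : ℕ} (f : Euc d → ℝ) (T : Set (Euc d × ℝ)) : Prop :=
  ∀ p ∈ T, f p.1 = p.2

/-- The circumradius of `A`: the radius of the smallest closed ball containing `A`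
(as an extended nonnegative real). -/
def circumradius {d : ℕ} (A : Set (Euc d)) : ℝ≥0∞ :=
  ⨅ c : Euc d, ⨆ x ∈ A, edist c x

/-- `f` is `ε`-respectful of `T`: `f = 1` on the convex hull of any subset of `X₊(T)` of
circumradius at most `ε`, and `f = -1` on the convex hull of any subset of `X₋(T)` of
circumradius at most `ε`. (Taking `ε = ⊤` gives respectful classifiers.) -/
def RespectfulOf {d : ℕ} (ε : ℝ≥0∞) (f : Euc d → ℝ) (T : Set (Euc d × ℝ)) : Prop :=
  (∀ A ⊆ posPts T, circumradius A ≤ ε → ∀ x ∈ convexHull ℝ A, f x = 1) ∧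
  (∀ B ⊆ negPts T, circumradius B ≤ ε → ∀ x ∈ convexHull ℝ B, f x = -1)

/-- `R_ε(T)`, the set of `ε`-respectful classifiers of `T`. -/
def respectfulSet {d : ℕ} (ε : ℝ≥0∞) (T : Set (Euc d × ℝ)) : Set (Euc d → ℝ) :=
  {f | IsClassifier f ∧ RespectfulOf ε f T}

/-- The margin `γ_f(S)` of a classifier `f` on `S`:
`min_{(x,y) ∈ S} d(x, f⁻¹(-y))`. -/
def clsMargin {d : ℕ} (f : Euc d → ℝ) (S : Set (Euc d × ℝ)) : ℝ :=
  ⨅ p : S, Metric.infDist (p : Euc d × ℝ).1 (f ⁻¹' {-(p : Euc d × ℝ).2})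

/-- `γ_f(S,S')`: the margin of `f` on `S` if `f` separates `S ∪ S'`, and `-∞` otherwise. -/
def clsMarginAug {d : ℕ} (f : Euc d → ℝ) (S S' : Set (Euc d × ℝ)) : EReal :=
  if Separates f (S ∪ S') then ((clsMargin f S : ℝ) : EReal) else ⊥

/-- The distance `d(P, Q) = inf {d(a,b) | a ∈ P, b ∈ Q}` between two sets,
as an extended nonnegative real. -/
def setSepDist {d : ℕ} (P Q : Set (Euc d)) : ℝ≥0∞ :=
  ⨅ a ∈ P, EMetric.infEdist a Q

/-- The uniform (rotation-invariant) probability measure on the sphere of radius `r`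
centered at the origin in `ℝ^d`, obtained by normalizing the surface measure induced by
Lebesgue measure on the unit sphere and pushing forward by scaling by `r`. -/
def uniformSphere (d : ℕ) (r : ℝ) : Measure (Euc d) :=
  (((volume : Measure (Euc d)).toSphere) Set.univ)⁻¹ •
    ((((volume : Measure (Euc d)).toSphere).map (Subtype.val)).map (fun x => r • x))

end

/-!
Work in the cone of all `(w, b)`, on which `y (⟪w, x⟫ + b)` is linear. At most `d` artificial points
can be separated by a hyperplane through any prescribed point, in particular through a point of `S`:
after translation this says that `d` vectors of `ℝ^d` lie in a closed half-space. If a separator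
`(w, b)` of `S ∪ S'` has positive margin on `S`, add it to such a hyperplane with the least
coefficient that makes the sum separate `S`. The coefficient is nonnegative, so the sum still
separates `S'`, and since it is least, the points of `S` come arbitrarily close to the new
hyperplane.
-/

theorem exists_ne_zero_forall_inner_nonneg {E : Type*} [NormedAddCommGroup E]
    [InnerProductSpace ℝ E] [FiniteDimensional ℝ E] [Nontrivial E] (t : Finset E)
    (ht : t.card ≤ Module.finrank ℝ E) : ∃ u : E, u ≠ 0 ∧ ∀ z ∈ t, 0 ≤ ⟪u, z⟫ := by
  obtain rfl | ⟨z₀, hz₀⟩ := t.eq_empty_or_nonempty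
  · simpa using exists_ne (0 : E)
  have hspan : Submodule.span ℝ (t.erase z₀ : Set E) ≠ ⊤ :=
    (span_lt_top_of_card_lt_finrank <| by
      simpa only [Finset.toFinset_coe] using (Finset.card_erase_lt_of_mem hz₀).trans_le ht).ne
  obtain ⟨u, hu, hu₀⟩ :=
    Submodule.exists_mem_ne_zero_of_ne_bot (mt Submodule.orthogonal_eq_bot_iff.1 hspan)
  have hzero : ∀ z ∈ t, z ≠ z₀ → ⟪u, z⟫ = 0 := fun z hz hne ↦
    (Submodule.mem_orthogonal' _ u).1 hu z
      (Submodule.subset_span (Finset.mem_coe.2 (Finset.mem_erase.2 ⟨hne, hz⟩)))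
  rcases le_total 0 ⟪u, z₀⟫ with hsign | hsign
  · refine ⟨u, hu₀, fun z hz ↦ ?_⟩
    obtain rfl | hne := eq_or_ne z z₀
    exacts [hsign, (hzero z hz hne).ge]
  · refine ⟨-u, neg_ne_zero.2 hu₀, fun z hz ↦ ?_⟩
    rw [inner_neg_left, neg_nonneg]
    obtain rfl | hne := eq_or_ne z z₀
    exacts [hsign, (hzero z hz hne).le]

theorem exists_iInf_add_mul_eq_zero {ι : Type*} [Nonempty ι] {f g : ι → ℝ} {δ : ℝ} (hδ : 0 < δ)
    (hf : BddBelow (range f)) (hg : BddAbove (range g)) (hδg : ∀ i, δ ≤ g i) :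
    ∃ c : ℝ, (∀ i, 0 ≤ f i + c * g i) ∧ ⨅ i, (f i + c * g i) = 0 := by
  obtain ⟨m, hm⟩ := hf
  obtain ⟨M, hM⟩ := hg
  have hg_pos : ∀ i, 0 < g i := fun i ↦ hδ.trans_le (hδg i)
  have hM_pos : 0 < M := (hg_pos (Classical.arbitrary ι)).trans_le (hM (mem_range_self _))
  have hbdd : BddAbove (range fun i ↦ -f i / g i) := by
    refine ⟨|m| / δ, ?_⟩
    rintro _ ⟨i, rfl⟩
    have hfm : -f i ≤ |m| := (neg_le_neg (hm (mem_range_self i))).trans (neg_le_abs m)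
    exact div_le_div₀ (abs_nonneg m) hfm hδ (hδg i)
  set c := ⨆ i, -f i / g i
  have hnonneg : ∀ i, 0 ≤ f i + c * g i := fun i ↦ by
    linarith [(div_le_iff₀ (hg_pos i)).1 (le_ciSup hbdd i)]
  refine ⟨c, hnonneg, le_antisymm (not_lt.1 fun hpos ↦ ?_) (le_ciInf hnonneg)⟩
  -- A positive infimum would leave room to decrease `c`.
  set η := ⨅ i, (f i + c * g i)
  have hle : c ≤ c - η / M := ciSup_le fun i ↦ by
    have hη : η ≤ f i + c * g i := ciInf_le ⟨0, by rintro _ ⟨j, rfl⟩; exact hnonneg j⟩ i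
    have hηM : η / M * g i ≤ η := by
      rw [div_mul_eq_mul_div, div_le_iff₀ hM_pos]
      exact mul_le_mul_of_nonneg_left (hM (mem_range_self i)) hpos.le
    rw [div_le_iff₀ (hg_pos i), sub_mul]
    linarith
  linarith [div_pos hpos hM_pos]

/-- The functional margin `y (⟪w, x⟫ + b)` of `(w, b)` at the labeled point `p = (x, y)`. It is
linear in `(w, b)`, and `(w, b)` with `w ≠ 0` separates a set exactly when it is nonnegative
there. -/
noncomputable def functionalMargin {d : ℕ} (w : Euc d) (b : ℝ) (p : Euc d × ℝ) : ℝ :=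
  p.2 * (⟪w, p.1⟫ + b)

section

variable {d : ℕ} {S S' T : Set (Euc d × ℝ)} {u w : Euc d} {β b : ℝ}
  {p : Euc d × ℝ}

theorem functionalMargin_add_smul (u w : Euc d) (β b c : ℝ) (p : Euc d × ℝ) :
    functionalMargin (u + c • w) (β + c * b) p =
      functionalMargin u β p + c * functionalMargin w b p := by
  simp only [functionalMargin, inner_add_left, real_inner_smul_left]
  ring

theorem functionalMargin_eq_abs (hp : p.2 = 1 ∨ p.2 = -1) (h : 0 ≤ functionalMargin w b p) :
    functionalMargin w b p = |⟪w, p.1⟫ + b| := by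
  rw [← abs_of_nonneg h, functionalMargin, abs_mul, (abs_eq zero_le_one).2 hp, one_mul]

theorem isBounded_range_functionalMargin (hS : Bornology.IsBounded S) (w : Euc d) (b : ℝ) :
    Bornology.IsBounded (range fun p : S ↦ functionalMargin w b p) := by
  rw [← image_eq_range]
  have hcont : Continuous (functionalMargin w b) := by
    unfold functionalMargin
    fun_prop
  exact (hS.isCompact_closure.image hcont).isBounded.subset (image_mono subset_closure)

theorem eq_zero_of_iInf_functionalMargin_zero_left (hne : S.Nonempty) (hlab : LabelsPM S)
    (h : ∀ p ∈ S, 0 ≤ functionalMargin 0 b p)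
    (hinf : ⨅ p : S, functionalMargin 0 b p.1 = 0) : b = 0 := by
  have := hne.to_subtype
  have habs : ∀ p : S, functionalMargin 0 b p.1 = |b| := fun p ↦ by
    simpa using functionalMargin_eq_abs (hlab p p.2) (h p p.2)
  rwa [funext habs, ciInf_const, abs_eq_zero] at hinf

theorem norm_mul_infDist_hyperplane_le (w : Euc d) (b : ℝ) (x : Euc d) :
    ‖w‖ * infDist x (hyperplane w b) ≤ |⟪w, x⟫ + b| := by
  obtain rfl | hw := eq_or_ne w 0
  · simp
  have hw' : ‖w‖ ≠ 0 := norm_ne_zero_iff.2 hw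
  set s := ⟪w, x⟫ + b with hs
  have hfoot : x - (s / ‖w‖ ^ 2) • w ∈ hyperplane w b := by
    rw [hyperplane, mem_ofPred_eq, inner_sub_right, real_inner_smul_right,
      real_inner_self_eq_norm_sq, div_mul_cancel₀ _ (pow_ne_zero 2 hw'), hs]
    ring
  calc ‖w‖ * infDist x (hyperplane w b)
      ≤ ‖w‖ * dist x (x - (s / ‖w‖ ^ 2) • w) := by gcongr; exact infDist_le_dist_of_mem hfoot
    _ = |s| := by
      rw [dist_self_sub_right, norm_smul, norm_div, norm_pow, norm_norm, Real.norm_eq_abs]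
      field_simp

theorem linMargin_le_infDist (hp : p ∈ S) (w : Euc d) (b : ℝ) :
    linMargin S w b ≤ infDist p.1 (hyperplane w b) :=
  ciInf_le (f := fun q : S ↦ infDist (q : Euc d × ℝ).1 (hyperplane w b))
    ⟨0, by rintro _ ⟨q, rfl⟩; exact infDist_nonneg⟩ ⟨p, hp⟩

theorem IsLinSep.norm_mul_linMargin_le (h : IsLinSep w b S) (hlab : LabelsPM S) (hp : p ∈ S) :
    ‖w‖ * linMargin S w b ≤ functionalMargin w b p :=
  calc ‖w‖ * linMargin S w b
      ≤ ‖w‖ * infDist p.1 (hyperplane w b) := by gcongr; exact linMargin_le_infDist hp w b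
    _ ≤ |⟪w, p.1⟫ + b| := norm_mul_infDist_hyperplane_le w b p.1
    _ = functionalMargin w b p := (functionalMargin_eq_abs (hlab p hp) (h.2 p hp)).symm

theorem IsLinSep.linMargin_nonpos (h : IsLinSep w b S) (hne : S.Nonempty) (hlab : LabelsPM S)
    (hinf : ⨅ p : S, functionalMargin w b p = 0) : linMargin S w b ≤ 0 := by
  have := hne.to_subtype
  have hle : ‖w‖ * linMargin S w b ≤ 0 :=
    hinf ▸ le_ciInf fun p ↦ h.norm_mul_linMargin_le hlab p.2
  exact nonpos_of_mul_nonpos_right hle (norm_pos_iff.2 h.1)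

theorem exists_isLinSep_mem_hyperplane [Nontrivial (Euc d)] (hT : T.Finite) (hcard : T.ncard ≤ d)
    (x : Euc d) : ∃ w b, IsLinSep w b T ∧ x ∈ hyperplane w b := by
  have hcard' : (hT.toFinset.image fun p ↦ p.2 • (p.1 - x)).card ≤ Module.finrank ℝ (Euc d) := by
    rw [finrank_euclideanSpace_fin]
    exact Finset.card_image_le.trans ((ncard_eq_toFinset_card T hT).symm.trans_le hcard)
  obtain ⟨w, hw, hnonneg⟩ := exists_ne_zero_forall_inner_nonneg _ hcard'
  refine ⟨w, -⟪w, x⟫, ⟨hw, fun p hp ↦ ?_⟩, add_neg_cancel _⟩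
  have hp' := hnonneg _ (Finset.mem_image_of_mem _ (hT.mem_toFinset.2 hp))
  rwa [real_inner_smul_right, inner_sub_right, sub_eq_add_neg] at hp'

theorem IsLinSep.exists_nonneg_iInf_functionalMargin_add_smul_eq_zero (h : IsLinSep w b S)
    (hpos : 0 < linMargin S w b) (hS : Bornology.IsBounded S) (hlab : LabelsPM S) (hp : p ∈ S)
    (hpu : functionalMargin u β p ≤ 0) :
    ∃ c : ℝ, 0 ≤ c ∧ (∀ q ∈ S, 0 ≤ functionalMargin (u + c • w) (β + c * b) q) ∧
      ⨅ q : S, functionalMargin (u + c • w) (β + c * b) q.1 = 0 := by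
  have : Nonempty S := ⟨p, hp⟩
  have hδ : 0 < ‖w‖ * linMargin S w b := mul_pos (norm_pos_iff.2 h.1) hpos
  have hδS : ∀ q ∈ S, ‖w‖ * linMargin S w b ≤ functionalMargin w b q :=
    fun _ hq ↦ h.norm_mul_linMargin_le hlab hq
  obtain ⟨c, hc, hinf⟩ := exists_iInf_add_mul_eq_zero hδ
    (isBounded_range_functionalMargin hS u β).bddBelow
    (isBounded_range_functionalMargin hS w b).bddAbove fun q ↦ hδS q q.2
  have hc_nonneg : 0 ≤ c :=
    nonneg_of_mul_nonneg_left (by linarith [hc ⟨p, hp⟩]) (hδ.trans_le (hδS p hp))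
  simp only [← functionalMargin_add_smul] at hc hinf
  exact ⟨c, hc_nonneg, fun q hq ↦ hc ⟨q, hq⟩, hinf⟩

theorem add_smul_ne_zero_of_iInf_functionalMargin_eq_zero {c : ℝ} (hu : u ≠ 0) (hlab : LabelsPM S)
    (hp : p ∈ S) (hpu : functionalMargin u β p = 0) (hpw : functionalMargin w b p ≠ 0)
    (hnonneg : ∀ q ∈ S, 0 ≤ functionalMargin (u + c • w) (β + c * b) q)
    (hinf : ⨅ q : S, functionalMargin (u + c • w) (β + c * b) q.1 = 0) : u + c • w ≠ 0 := by
  intro hzero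
  rw [hzero] at hnonneg hinf
  have hbias : β + c * b = 0 :=
    eq_zero_of_iInf_functionalMargin_zero_left ⟨p, hp⟩ hlab hnonneg hinf
  have hcomb := functionalMargin_add_smul u w β b c p
  rw [hzero, hbias, hpu, zero_add, functionalMargin, inner_zero_left, add_zero, mul_zero] at hcomb
  have hc : c = 0 := (mul_eq_zero.1 hcomb.symm).resolve_right hpw
  exact hu (by rwa [hc, zero_smul, add_zero] at hzero)

theorem IsLinSep.exists_linMargin_nonpos_of_mem_hyperplane (h : IsLinSep w b (S ∪ S'))
    (hpos : 0 < linMargin S w b) (hS : Bornology.IsBounded S) (hlab : LabelsPM S)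
    (hu : IsLinSep u β S') (hp : p ∈ S) (hpu : p.1 ∈ hyperplane u β) :
    ∃ w' b', IsLinSep w' b' (S ∪ S') ∧ linMargin S w' b' ≤ 0 := by
  have hwS : IsLinSep w b S := ⟨h.1, fun q hq ↦ h.2 q (.inl hq)⟩
  have hpu_zero : functionalMargin u β p = 0 := mul_eq_zero_of_right _ hpu
  have hpw_pos : 0 < functionalMargin w b p :=
    (mul_pos (norm_pos_iff.2 h.1) hpos).trans_le (hwS.norm_mul_linMargin_le hlab hp)
  obtain ⟨c, hc, hnonneg, hinf⟩ :=
    hwS.exists_nonneg_iInf_functionalMargin_add_smul_eq_zero hpos hS hlab hp hpu_zero.le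
  have hne_zero : u + c • w ≠ 0 :=
    add_smul_ne_zero_of_iInf_functionalMargin_eq_zero hu.1 hlab hp hpu_zero hpw_pos.ne' hnonneg hinf
  have hsepS : IsLinSep (u + c • w) (β + c * b) S := ⟨hne_zero, hnonneg⟩
  have hnonneg' : ∀ q ∈ S', 0 ≤ functionalMargin (u + c • w) (β + c * b) q := fun q hq ↦
    functionalMargin_add_smul u w β b c q ▸
      add_nonneg (hu.2 q hq) (mul_nonneg hc (h.2 q (.inr hq)))
  exact ⟨_, _, ⟨hne_zero, fun q hq ↦ hq.elim (hnonneg q) (hnonneg' q)⟩,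
    hsepS.linMargin_nonpos ⟨p, hp⟩ hlab hinf⟩

theorem IsLinSep.alpha_le_linMargin (h : IsLinSep w b (S ∪ S')) : alpha S S' ≤ linMargin S w b := by
  rw [alpha, if_pos ⟨w, b, h⟩]
  exact sInf_le ⟨w, b, h, rfl⟩

end

theorem augmentation_size_lower_bound_general {d : ℕ} (S S' : Set (Euc d × ℝ))
    (hS : Bornology.IsBounded S) (hSlab : LabelsPM S) (hSne : S.Nonempty)
    (hS'fin : S'.Finite) (hcard : S'.ncard < d + 1) :
    alpha S S' ≤ 0 := by
  by_cases hex : ∃ w b, IsLinSep w b (S ∪ S')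
  · obtain ⟨w, b, hsep⟩ := hex
    suffices hmain : ∃ w' b', IsLinSep w' b' (S ∪ S') ∧ linMargin S w' b' ≤ 0 by
      obtain ⟨w', b', hsep', hle⟩ := hmain
      exact hsep'.alpha_le_linMargin.trans (EReal.coe_nonpos.2 hle)
    rcases le_or_gt (linMargin S w b) 0 with hle | hpos
    · exact ⟨w, b, hsep, hle⟩
    have : Nontrivial (Euc d) := ⟨w, 0, hsep.1⟩
    obtain ⟨p, hp⟩ := hSne
    obtain ⟨u, β, hu, hpu⟩ := exists_isLinSep_mem_hyperplane hS'fin (Nat.lt_succ_iff.1 hcard) p.1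
    exact hsep.exists_linMargin_nonpos_of_mem_hyperplane hpos hS hSlab hu hp hpu
  · rw [alpha, if_neg hex]
    exact bot_le

/-- Theorem 1 of the paper: if the artificial data set `S'` has fewer
than `d+1` points, then the worst-case margin satisfies `α(S,S') ≤ 0`. -/
theorem augmentation_size_lower_bound {d : ℕ} (S S' : Set (Euc d × ℝ))
    (hSfin : S.Finite) (hSlab : LabelsPM S)
    (hpos : (posPts S).Nonempty) (hneg : (negPts S).Nonempty)
    (hS'lab : LabelsPM S') (hS'fin : S'.Finite) (hcard : S'.ncard < d + 1) :
    alpha S S' ≤ 0 :=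
  augmentation_size_lower_bound_general S S' hSfin.isBounded hSlab
    (hpos.elim fun _ hx ↦ ⟨_, hx⟩) hS'fin hcard
end

section
/- Let S ⊆ ℝ^d × {−1,+1} be a finite, linearly separable training set with max-margin γ*. Then there exists an artificial data set S' ⊆ ℝ^d × {−1,+1} with |S'| = d+1 such that α(S,S') = γ*; i.e., S ∪ S' is linearly separable and every linear separator of S ∪ S' has margin exactly γ* on S. -/
open scoped RealInnerProductSpace ENNReal Classical
open Metric Set MeasureTheory

/-!
Let `H` be the hyperplane of a separator of `S`. Choose `d` affinely independent points spanning
`H`, label them `+1`, and label their centroid `-1`. A separator of these points is an affine form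
that is nonnegative at the spanning points while its average over them is nonpositive, so it
vanishes at each of them and hence on `H`. Its own hyperplane therefore contains `H`, so it equals
`H` and has the same margin on `S`.
-/

open Module

section AffineGeometry

theorem map_eq_zero_of_map_affineCombination_nonpos {𝕜 V P ι : Type*} [Field 𝕜] [LinearOrder 𝕜]
    [IsStrictOrderedRing 𝕜] [AddCommGroup V] [Module 𝕜 V] [AddTorsor V P] {f : P →ᵃ[𝕜] 𝕜}
    {s : Finset ι} {p : ι → P} {c : ι → 𝕜} (hc : ∀ i ∈ s, 0 < c i) (hsum : ∑ i ∈ s, c i = 1)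
    (hf : ∀ i ∈ s, 0 ≤ f (p i)) (hcomb : f (s.affineCombination 𝕜 p c) ≤ 0) :
    ∀ i ∈ s, f (p i) = 0 := by
  have hnonneg : ∀ i ∈ s, 0 ≤ c i * f (p i) := fun i hi => mul_nonneg (hc i hi).le (hf i hi)
  have hmap : f (s.affineCombination 𝕜 p c) = ∑ i ∈ s, c i * f (p i) := by
    simp only [s.map_affineCombination p c hsum f,
      s.affineCombination_eq_linear_combination _ _ hsum, Function.comp_apply, smul_eq_mul]
  have hzero : ∑ i ∈ s, c i * f (p i) = 0 :=
    le_antisymm (hmap ▸ hcomb) (Finset.sum_nonneg hnonneg)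
  intro i hi
  exact (mul_eq_zero.1 ((Finset.sum_eq_zero_iff_of_nonneg hnonneg).1 hzero i hi)).resolve_left
    (hc i hi).ne'

theorem exists_finset_card_eq_affineSpan_eq {k V P : Type*} [DivisionRing k] [AddCommGroup V]
    [Module k V] [AddTorsor V P] [FiniteDimensional k V] {Q : AffineSubspace k P}
    (hQ : (Q : Set P).Nonempty) :
    ∃ t : Finset P, t.card = finrank k Q.direction + 1 ∧ affineSpan k (t : Set P) = Q := by
  obtain ⟨t, -, hspan, hind⟩ := exists_affineIndependent k V (Q : Set P)
  rw [AffineSubspace.affineSpan_coe] at hspan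
  lift t to Finset P using finite_set_of_fin_dim_affineIndependent k hind
  have htne : (t : Set P).Nonempty := (affineSpan_nonempty k).1 (hspan ▸ hQ)
  have : Nonempty (t : Set P) := htne.to_subtype
  refine ⟨t, ?_, hspan⟩
  have hrank := hind.finrank_vectorSpan_add_one
  rw [Subtype.range_coe, ← direction_affineSpan, hspan] at hrank
  simpa using hrank.symm

theorem finrank_orthogonal_span_singleton_add_one {𝕜 E : Type*} [RCLike 𝕜] [NormedAddCommGroup E]
    [InnerProductSpace 𝕜 E] [FiniteDimensional 𝕜 E] {v : E} (hv : v ≠ 0) :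
    finrank 𝕜 (Submodule.span 𝕜 {v})ᗮ + 1 = finrank 𝕜 E := by
  rw [← finrank_span_singleton (K := 𝕜) hv, add_comm, Submodule.finrank_add_finrank_orthogonal]

/-- The affine form `x ↦ ⟪w, x⟫ + b`, whose zero set is the hyperplane of `(w, b)`. -/
noncomputable def affineForm {E : Type*} [NormedAddCommGroup E] [InnerProductSpace ℝ E] (w : E)
    (b : ℝ) : E →ᵃ[ℝ] ℝ :=
  (innerₗ E w).toAffineMap + AffineMap.const ℝ E b

theorem affineForm_apply {E : Type*} [NormedAddCommGroup E] [InnerProductSpace ℝ E] (w : E) (b : ℝ)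
    (x : E) : affineForm w b x = ⟪w, x⟫ + b := rfl

end AffineGeometry

section Hyperplane

variable {d : ℕ} {w w₀ : Euc d} {b b₀ : ℝ}

theorem mem_hyperplane_iff {x : Euc d} : x ∈ hyperplane w b ↔ ⟪w, x⟫ + b = 0 := Iff.rfl

theorem hyperplane_nonempty (hw : w ≠ 0) (b : ℝ) : (hyperplane w b).Nonempty := by
  refine ⟨(-b / ⟪w, w⟫) • w, ?_⟩
  have hww : ⟪w, w⟫ ≠ 0 := inner_self_ne_zero.2 hw
  rw [mem_hyperplane_iff, inner_smul_right, div_mul_cancel₀ _ hww, neg_add_cancel]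

theorem hyperplane_eq_coe_mk' {p : Euc d} (hp : p ∈ hyperplane w b) :
    hyperplane w b = AffineSubspace.mk' p (Submodule.span ℝ {w})ᗮ := by
  ext x
  rw [mem_hyperplane_iff] at hp
  rw [mem_hyperplane_iff, SetLike.mem_coe, AffineSubspace.mem_mk',
    Submodule.mem_orthogonal_singleton_iff_inner_right, vsub_eq_sub, inner_sub_right,
    sub_eq_zero, eq_neg_of_add_eq_zero_left hp, add_eq_zero_iff_eq_neg]

theorem affineSpan_subset_hyperplane {s : Set (Euc d)} (hs : s ⊆ hyperplane w b) :
    (affineSpan ℝ s : Set (Euc d)) ⊆ hyperplane w b := by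
  obtain rfl | ⟨p, hp⟩ := s.eq_empty_or_nonempty
  · simp only [AffineSubspace.span_empty, AffineSubspace.bot_coe, empty_subset]
  · have hplane := hyperplane_eq_coe_mk' (hs hp)
    rw [hplane] at hs ⊢
    exact affineSpan_le.2 hs

theorem hyperplane_eq_of_subset (hw₀ : w₀ ≠ 0) (hw : w ≠ 0)
    (h : hyperplane w₀ b₀ ⊆ hyperplane w b) : hyperplane w₀ b₀ = hyperplane w b := by
  obtain ⟨p, hp⟩ := hyperplane_nonempty hw₀ b₀
  have hp' := h hp
  rw [hyperplane_eq_coe_mk' hp, hyperplane_eq_coe_mk' hp'] at h ⊢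
  have hle : Submodule.span ℝ {w} ≤ Submodule.span ℝ {w₀} :=
    Submodule.orthogonal_le_orthogonal_iff.1 ((AffineSubspace.mk'_le_mk'_iff p).1 h)
  have hatom : IsAtom (Submodule.span ℝ {w₀}) := nonzero_span_atom w₀ hw₀
  rw [(hatom.le_iff_eq (Submodule.span_singleton_eq_bot.not.2 hw)).1 hle]

theorem exists_finset_card_eq_affineSpan_eq_hyperplane (hw : w ≠ 0) (b : ℝ) :
    ∃ t : Finset (Euc d),
      t.card = d ∧ (affineSpan ℝ (t : Set (Euc d)) : Set (Euc d)) = hyperplane w b := by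
  obtain ⟨p, hp⟩ := hyperplane_nonempty hw b
  obtain ⟨t, hcard, hspan⟩ :=
    exists_finset_card_eq_affineSpan_eq (AffineSubspace.mk'_nonempty p (Submodule.span ℝ {w})ᗮ)
  refine ⟨t, ?_, by rw [hspan, hyperplane_eq_coe_mk' hp]⟩
  rw [hcard, AffineSubspace.direction_mk', finrank_orthogonal_span_singleton_add_one hw,
    finrank_euclideanSpace_fin]

end Hyperplane

section Separators

variable {d : ℕ} {w : Euc d} {b : ℝ}

theorem isLinSep_union {S T : Set (Euc d × ℝ)} :
    IsLinSep w b (S ∪ T) ↔ IsLinSep w b S ∧ IsLinSep w b T := by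
  simp only [IsLinSep, mem_union, or_imp, forall_and]
  tauto

theorem alpha_eq_of_forall_linMargin_eq {S S' : Set (Euc d × ℝ)} {γ : ℝ}
    (hex : ∃ w b, IsLinSep w b (S ∪ S'))
    (hall : ∀ w b, IsLinSep w b (S ∪ S') → linMargin S w b = γ) : alpha S S' = γ := by
  obtain ⟨w₀, b₀, h₀⟩ := hex
  rw [alpha, if_pos ⟨w₀, b₀, h₀⟩]
  apply le_antisymm
  · exact sInf_le ⟨w₀, b₀, h₀, by rw [hall w₀ b₀ h₀]⟩
  · apply le_sInf
    rintro _ ⟨w, b, h, rfl⟩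
    rw [hall w b h]

end Separators

/-- The artificial data set of the theorem: the points of `t` labeled `+1` together with their
centroid labeled `-1`. For empty `t` the centroid is the junk value `0`. -/
noncomputable def centroidAug {d : ℕ} (t : Finset (Euc d)) : Set (Euc d × ℝ) :=
  insert (t.centroid ℝ id, -1) ((fun x => (x, 1)) '' (t : Set (Euc d)))

section CentroidAug

variable {d : ℕ} {w w₀ : Euc d} {b b₀ : ℝ} {t : Finset (Euc d)}

theorem labelsPM_centroidAug (t : Finset (Euc d)) : LabelsPM (centroidAug t) := by
  rintro _ (rfl | ⟨x, -, rfl⟩)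
  exacts [Or.inr rfl, Or.inl rfl]

theorem finite_centroidAug (t : Finset (Euc d)) : (centroidAug t).Finite :=
  (t.finite_toSet.image _).insert _

theorem ncard_centroidAug (t : Finset (Euc d)) : (centroidAug t).ncard = t.card + 1 := by
  have hlabel : (t.centroid ℝ id, (-1 : ℝ)) ∉ (fun x => (x, 1)) '' (t : Set (Euc d)) := by
    rintro ⟨x, -, hx⟩
    have : (1 : ℝ) = -1 := congrArg Prod.snd hx
    norm_num at this
  rw [centroidAug, ncard_insert_of_notMem hlabel (t.finite_toSet.image _),
    ncard_image_of_injective _ (Prod.mk_left_injective 1), ncard_coe_finset]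

theorem isLinSep_centroidAug_iff (ht : t.Nonempty) :
    IsLinSep w b (centroidAug t) ↔ w ≠ 0 ∧ ↑t ⊆ hyperplane w b := by
  refine and_congr_right fun _ => ⟨fun hsep x hx => ?_, fun hsub => ?_⟩
  · refine map_eq_zero_of_map_affineCombination_nonpos (f := affineForm w b) (p := id)
      (c := t.centroidWeights ℝ) (fun i _ => ?_)
      (t.sum_centroidWeights_eq_one_of_nonempty ℝ ht) (fun y hy => ?_) ?_ x hx
    · rw [Finset.centroidWeights_apply]
      exact inv_pos.2 (Nat.cast_pos.2 ht.card_pos)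
    · simpa only [one_mul, affineForm_apply, id_eq] using hsep (y, 1) (Or.inr ⟨y, hy, rfl⟩)
    · simpa only [neg_one_mul, neg_nonneg, ge_iff_le, affineForm_apply, Finset.centroid_def]
        using hsep _ (Or.inl rfl)
  · have hcentroid : t.centroid ℝ id ∈ hyperplane w b := by
      apply affineSpan_subset_hyperplane hsub
      have hmem := affineCombination_mem_affineSpan_image
        (t.sum_centroidWeights_eq_one_of_nonempty ℝ ht) (s' := t) (fun _ h h' => absurd h h') id
      rwa [image_id] at hmem
    have hzero : ∀ {x : Euc d} (y : ℝ), x ∈ hyperplane w b → y * (⟪w, x⟫ + b) ≥ 0 :=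
      fun y hx => (mul_eq_zero_of_right y hx).ge
    rintro _ (rfl | ⟨x, hx, rfl⟩)
    exacts [hzero _ hcentroid, hzero _ (hsub hx)]

theorem isLinSep_centroidAug_iff_hyperplane_eq (hw₀ : w₀ ≠ 0)
    (hspan : (affineSpan ℝ (t : Set (Euc d)) : Set (Euc d)) = hyperplane w₀ b₀) :
    IsLinSep w b (centroidAug t) ↔ w ≠ 0 ∧ hyperplane w₀ b₀ = hyperplane w b := by
  have ht : t.Nonempty :=
    Finset.coe_nonempty.1 ((affineSpan_nonempty ℝ).1 (hspan ▸ hyperplane_nonempty hw₀ b₀))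
  rw [isLinSep_centroidAug_iff ht]
  refine and_congr_right fun hw => ⟨fun hsub => ?_, fun heq => ?_⟩
  · exact hyperplane_eq_of_subset hw₀ hw (hspan ▸ affineSpan_subset_hyperplane hsub)
  · exact heq ▸ hspan ▸ subset_affineSpan ℝ _

end CentroidAug

theorem exists_augmentation_achieving_max_margin_general {d : ℕ} {S : Set (Euc d × ℝ)} {w₀ : Euc d}
    {b₀ : ℝ} (hsep₀ : IsLinSep w₀ b₀ S) :
    ∃ S' : Set (Euc d × ℝ), LabelsPM S' ∧ S'.Finite ∧ S'.ncard = d + 1 ∧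
      (∃ w b, IsLinSep w b (S ∪ S')) ∧
      (∀ w b, IsLinSep w b (S ∪ S') → linMargin S w b = linMargin S w₀ b₀) ∧
      alpha S S' = (linMargin S w₀ b₀ : EReal) := by
  have hw₀ : w₀ ≠ 0 := hsep₀.1
  obtain ⟨t, hcard, hspan⟩ := exists_finset_card_eq_affineSpan_eq_hyperplane hw₀ b₀
  have hex : ∃ w b, IsLinSep w b (S ∪ centroidAug t) :=
    ⟨w₀, b₀, isLinSep_union.2
      ⟨hsep₀, (isLinSep_centroidAug_iff_hyperplane_eq hw₀ hspan).2 ⟨hw₀, rfl⟩⟩⟩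
  have hall : ∀ w b, IsLinSep w b (S ∪ centroidAug t) → linMargin S w b = linMargin S w₀ b₀ := by
    intro w b hsep
    have hplane : hyperplane w₀ b₀ = hyperplane w b :=
      ((isLinSep_centroidAug_iff_hyperplane_eq hw₀ hspan).1 (isLinSep_union.1 hsep).2).2
    rw [linMargin, linMargin, hplane]
  exact ⟨centroidAug t, labelsPM_centroidAug t, finite_centroidAug t,
    by rw [ncard_centroidAug, hcard], hex, hall, alpha_eq_of_forall_linMargin_eq hex hall⟩

/-- Theorem 3 of the paper: there is an artificial set `S'` of exactly
`d+1` points such that `α(S,S') = γ*`: the augmented set is linearly separable and every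
linear separator of it has margin exactly `γ*` on `S`. -/
theorem exists_augmentation_achieving_max_margin {d : ℕ} (S : Set (Euc d × ℝ))
    (hSfin : S.Finite) (hSlab : LabelsPM S)
    (hpos : (posPts S).Nonempty) (hneg : (negPts S).Nonempty)
    (γstar : ℝ) (hmax : IsMaxMargin S γstar) :
    ∃ S' : Set (Euc d × ℝ), LabelsPM S' ∧ S'.Finite ∧ S'.ncard = d + 1 ∧
      (∃ w b, IsLinSep w b (S ∪ S')) ∧
      (∀ w b, IsLinSep w b (S ∪ S') → linMargin S w b = γstar) ∧
      alpha S S' = (γstar : EReal) := by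
  obtain ⟨⟨w₀, b₀, hsep₀, rfl⟩, -⟩ := hmax
  exact exists_augmentation_achieving_max_margin_general hsep₀
end

section
/- Fix natural numbers n, m ≥ 1, a radius r > 0, and dimension d ≥ 2. There exists a training set S ⊆ ℝ^d × {−1,+1} with |X₊| = n and |X₋| = m such that for every artificial set S' ⊆ S_r with |X₊'| < n (where X₊' = {x : (x,1) ∈ S'}), the worst-case margin satisfies α(S,S') = 0. -/
open scoped RealInnerProductSpace ENNReal Classical
open Metric Set MeasureTheory

/-! Place the `n` positive points on a parabola and the negative points far down its axis. The
tangent at each positive point leaves the other positive points strictly above it and all negative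
points strictly below it. Dilating the configuration multiplies these finitely many gaps but not
the slopes, so the gaps can be made larger than `2r`. The `r`-balls around the positive points are
then disjoint, so fewer than `n` artificial positive points miss one of them entirely, and the
tangent at its centre still separates the augmented set: its margin is `0`. -/

section MetricSpace

variable {α : Type*} [PseudoMetricSpace α]

lemma exists_forall_lt_dist_of_encard_lt {X P : Set α} {r : ℝ}
    (hX : X.Pairwise fun x x' => 2 * r < dist x x') (hP : P.encard < X.encard) :
    ∃ x ∈ X, ∀ p ∈ P, r < dist p x := by
  by_contra! hclose
  choose! p hpP hpx using hclose
  obtain ⟨x, hx, x', hx', hne, heq⟩ := exists_ne_map_eq_of_encard_lt_of_maps_to hP hpP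
  have hx'r : dist (p x) x' ≤ r := heq ▸ hpx x' hx'
  linarith [hX hx hx' hne, dist_triangle_left x x' (p x), hpx x hx]

lemma exists_dist_le_of_infDist_le {K : Set α} (hK : IsCompact K) (hne : K.Nonempty) {p : α}
    {r : ℝ} (h : infDist p K ≤ r) : ∃ z ∈ K, dist p z ≤ r := by
  obtain ⟨z, hz, hpz⟩ := hK.exists_infDist_eq_dist hne p
  exact ⟨z, hz, hpz ▸ h⟩

end MetricSpace

section Exposed

open scoped Pointwise
open Filter

variable {E : Type*} [SeminormedAddCommGroup E] [InnerProductSpace ℝ E]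

/-- For `ρ ≥ 0`, the hyperplane through `x` with normal vector `w` has all of `X \ {x}` on its
positive side and all of `Y` on its negative side, each at distance more than `ρ`. The distances
are multiplied by `‖w‖`, so that `w` need not be a unit vector. -/
def Exposes (ρ : ℝ) (w x : E) (X Y : Set E) : Prop :=
  (∀ x' ∈ X, x' ≠ x → ρ * ‖w‖ < ⟪w, x' - x⟫) ∧ ∀ y ∈ Y, ρ * ‖w‖ < ⟪w, x - y⟫

/-- Through every point of `X` there is a hyperplane that separates `X` from `Y` and is at distance
more than `ρ ≥ 0` from all the other points of both sets: a quantitative form of strictly convex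
position. -/
def AllExposed (ρ : ℝ) (X Y : Set E) : Prop :=
  ∀ x ∈ X, ∃ w, Exposes ρ w x X Y

variable {X Y : Set E} {w x : E} {ρ σ : ℝ}

lemma inner_sub_le_mul_norm_of_dist_le {p q : E} (h : dist p q ≤ ρ) :
    ⟪w, p - q⟫ ≤ ρ * ‖w‖ := by
  calc ⟪w, p - q⟫ ≤ ‖w‖ * ‖p - q‖ := real_inner_le_norm w _
    _ ≤ ρ * ‖w‖ := by rw [← dist_eq_norm, mul_comm]; gcongr

lemma Exposes.mono (h : Exposes σ w x X Y) (hρσ : ρ ≤ σ) : Exposes ρ w x X Y := by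
  have hle : ρ * ‖w‖ ≤ σ * ‖w‖ := by gcongr
  exact ⟨fun x' hx' hne => hle.trans_lt (h.1 x' hx' hne), fun y hy => hle.trans_lt (h.2 y hy)⟩

lemma Exposes.ne_zero (h : Exposes ρ w x X Y) (hY : Y.Nonempty) : w ≠ 0 := by
  rintro rfl
  obtain ⟨y, hy⟩ := hY
  simpa using h.2 y hy

lemma Exposes.lt_dist (h : Exposes ρ w x X Y) {x' : E} (hx' : x' ∈ X) (hne : x' ≠ x) :
    ρ < dist x' x := by
  contrapose! hne
  by_contra hx'x
  exact (inner_sub_le_mul_norm_of_dist_le hne).not_gt (h.1 x' hx' hx'x)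

lemma AllExposed.pairwise_lt_dist (h : AllExposed ρ X Y) :
    X.Pairwise fun x x' => ρ < dist x x' := by
  intro x hx x' hx' hne
  obtain ⟨w, hw⟩ := h x' hx'
  exact hw.lt_dist hx hne

lemma Exposes.eventually_smul (h : Exposes 0 w x X Y) (hX : X.Finite) (hY : Y.Finite) (ρ : ℝ) :
    ∀ᶠ c : ℝ in atTop, Exposes ρ w (c • x) (c • X) (c • Y) := by
  have hgrow {a : ℝ} (ha : 0 * ‖w‖ < a) : ∀ᶠ c : ℝ in atTop, ρ * ‖w‖ < c * a :=
    (tendsto_id.atTop_mul_const (by simpa using ha)).eventually_gt_atTop _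
  have hXc : ∀ᶠ c : ℝ in atTop, ∀ x' ∈ X, x' ≠ x → ρ * ‖w‖ < c * ⟪w, x' - x⟫ :=
    (eventually_all_finite hX).2 fun x' hx' =>
      eventually_imp_distrib_left.2 fun hne => hgrow (h.1 x' hx' hne)
  have hYc : ∀ᶠ c : ℝ in atTop, ∀ y ∈ Y, ρ * ‖w‖ < c * ⟪w, x - y⟫ :=
    (eventually_all_finite hY).2 fun y hy => hgrow (h.2 y hy)
  filter_upwards [hXc, hYc] with c hXc hYc
  constructor
  · rintro _ ⟨x', hx', rfl⟩ hne
    simpa only [← smul_sub, real_inner_smul_right] using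
      hXc x' hx' fun heq => hne (congrArg (c • ·) heq)
  · rintro _ ⟨y, hy, rfl⟩
    simpa only [← smul_sub, real_inner_smul_right] using hYc y hy

lemma AllExposed.eventually_smul (h : AllExposed 0 X Y) (hX : X.Finite) (hY : Y.Finite) (ρ : ℝ) :
    ∀ᶠ c : ℝ in atTop, AllExposed ρ (c • X) (c • Y) := by
  choose! w hw using h
  filter_upwards [(eventually_all_finite hX).2 fun x hx => (hw x hx).eventually_smul hX hY ρ]
    with c hc
  rintro _ ⟨x, hx, rfl⟩
  exact ⟨w x, hc x hx⟩

end Exposed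

section Parabola

variable {E : Type*} [SeminormedAddCommGroup E] [InnerProductSpace ℝ E] {v : Fin 2 → E}

/-- The parabola `y = x²` in the plane with coordinate vectors `v 0` and `v 1`, parametrised
by `x`. -/
def parabola (v : Fin 2 → E) (t : ℝ) : E := t • v 0 + t ^ 2 • v 1

/-- The upward normal of `parabola v` at the parameter `t`. -/
def parabolaNormal (v : Fin 2 → E) (t : ℝ) : E := v 1 - (2 * t) • v 0

lemma inner_parabolaNormal (hv : Orthonormal ℝ v) (t a b : ℝ) :
    ⟪parabolaNormal v t, a • v 0 + b • v 1⟫ = b - 2 * t * a := by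
  have h01 : ⟪v 0, v 1⟫ = 0 := hv.inner_eq_zero zero_ne_one
  have h10 : ⟪v 1, v 0⟫ = 0 := hv.inner_eq_zero one_ne_zero
  simp only [parabolaNormal, inner_sub_left, inner_add_right, real_inner_smul_left,
    real_inner_smul_right, real_inner_self_eq_norm_sq, hv.norm_eq_one, h01, h10]
  ring

lemma inner_parabolaNormal_parabola_sub (hv : Orthonormal ℝ v) (t s : ℝ) :
    ⟪parabolaNormal v t, parabola v s - parabola v t⟫ = (s - t) ^ 2 := by
  simp only [parabola, inner_sub_right, inner_parabolaNormal hv]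
  ring

lemma inner_parabolaNormal_parabola_sub_smul (hv : Orthonormal ℝ v) (t u : ℝ) :
    ⟪parabolaNormal v t, parabola v t - u • v 1⟫ = -t ^ 2 - u := by
  have hu : ⟪parabolaNormal v t, u • v 1⟫ = u := by
    simpa using inner_parabolaNormal hv t 0 u
  rw [inner_sub_right, hu, parabola, inner_parabolaNormal hv]
  ring

lemma parabola_injective (hv : Orthonormal ℝ v) : Function.Injective (parabola v) := by
  intro s t hst
  have hsq : (s - t) ^ 2 = 0 := by
    rw [← inner_parabolaNormal_parabola_sub hv, hst, sub_self, inner_zero_right]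
  exact sub_eq_zero.1 (sq_eq_zero_iff.1 hsq)

lemma allExposed_parabola (hv : Orthonormal ℝ v) {T U : Set ℝ}
    (hTU : ∀ t ∈ T, ∀ u ∈ U, u < -t ^ 2) :
    AllExposed 0 (parabola v '' T) ((fun u : ℝ => u • v 1) '' U) := by
  rintro _ ⟨t, ht, rfl⟩
  refine ⟨parabolaNormal v t, ?_, ?_⟩
  · rintro _ ⟨s, -, rfl⟩ hne
    have hst : s - t ≠ 0 := sub_ne_zero.2 fun heq => hne (congrArg (parabola v) heq)
    rw [zero_mul, inner_parabolaNormal_parabola_sub hv]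
    positivity
  · rintro _ ⟨u, hu, rfl⟩
    rw [zero_mul, inner_parabolaNormal_parabola_sub_smul hv]
    linarith [hTU t ht u hu]

lemma exists_allExposed_zero (hv : Orthonormal ℝ v) (n m : ℕ) :
    ∃ X Y : Set E, X.encard = n ∧ Y.encard = m ∧ AllExposed 0 X Y := by
  obtain ⟨T, hT, hTn⟩ :=
    exists_subset_encard_eq (s := Ioo (0 : ℝ) 1) (k := n) (by simp [(Ioo_infinite _).encard_eq])
  obtain ⟨U, hU, hUm⟩ :=
    exists_subset_encard_eq (s := Iio (-1 : ℝ)) (k := m) (by simp [(Iio_infinite _).encard_eq])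
  refine ⟨parabola v '' T, (fun u : ℝ => u • v 1) '' U, ?_, ?_, allExposed_parabola hv ?_⟩
  · rw [(parabola_injective hv).encard_image, hTn]
  · rw [(smul_left_injective ℝ (hv.ne_zero 1)).encard_image, hUm]
  · intro t ht u hu
    have hu1 : u < -1 := hU hu
    nlinarith [(hT ht).1, (hT ht).2]

lemma exists_allExposed (hv : Orthonormal ℝ v) (n m : ℕ) (ρ : ℝ) :
    ∃ X Y : Set E, X.encard = n ∧ Y.encard = m ∧ AllExposed ρ X Y := by
  obtain ⟨X, Y, hX, hY, hXY⟩ := exists_allExposed_zero hv n m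
  obtain ⟨c, hc, hc0⟩ :=
    ((hXY.eventually_smul (finite_of_encard_eq_coe hX) (finite_of_encard_eq_coe hY) ρ).and
      (Filter.eventually_ne_atTop 0)).exists
  have hinj := smul_right_injective E hc0
  exact ⟨_, _, (hinj.encard_image X).trans hX, (hinj.encard_image Y).trans hY, hc⟩

end Parabola

section Labeled

variable {d : ℕ}

/-- The training set with positive points `X` and negative points `Y`. -/
def labeledSet (X Y : Set (Euc d)) : Set (Euc d × ℝ) := X ×ˢ {1} ∪ Y ×ˢ {-1}

lemma posPts_labeledSet (X Y : Set (Euc d)) : posPts (labeledSet X Y) = X := by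
  ext x
  simp [posPts, labeledSet, show (1 : ℝ) ≠ -1 by norm_num]

lemma negPts_labeledSet (X Y : Set (Euc d)) : negPts (labeledSet X Y) = Y := by
  ext x
  simp [negPts, labeledSet, show (-1 : ℝ) ≠ 1 by norm_num]

lemma labelsPM_labeledSet (X Y : Set (Euc d)) : LabelsPM (labeledSet X Y) := by
  rintro p (hp | hp)
  · exact Or.inl hp.2
  · exact Or.inr hp.2

lemma finite_labeledSet {X Y : Set (Euc d)} (hX : X.Finite) (hY : Y.Finite) :
    (labeledSet X Y).Finite :=
  (hX.prod (finite_singleton 1)).union (hY.prod (finite_singleton (-1)))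

end Labeled

section Margin

variable {d : ℕ} {S S' T : Set (Euc d × ℝ)} {w : Euc d} {b r : ℝ}

lemma finite_posPts (hS : S.Finite) : (posPts S).Finite :=
  hS.preimage (Prod.mk_left_injective 1).injOn

lemma finite_negPts (hS : S.Finite) : (negPts S).Finite :=
  hS.preimage (Prod.mk_left_injective (-1)).injOn

lemma linMargin_nonneg (S : Set (Euc d × ℝ)) (w : Euc d) (b : ℝ) : 0 ≤ linMargin S w b :=
  Real.iInf_nonneg fun _ => infDist_nonneg

lemma linMargin_eq_zero {p : Euc d × ℝ} (hp : p ∈ S) (hpw : p.1 ∈ hyperplane w b) :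
    linMargin S w b = 0 := by
  refine le_antisymm ?_ (linMargin_nonneg S w b)
  calc linMargin S w b ≤ infDist p.1 (hyperplane w b) :=
        ciInf_le ⟨0, forall_mem_range.2 fun _ => infDist_nonneg⟩ (⟨p, hp⟩ : S)
    _ = 0 := infDist_zero_of_mem hpw

lemma alpha_eq_zero_of_mem_hyperplane {p : Euc d × ℝ} (hsep : IsLinSep w b (S ∪ S'))
    (hp : p ∈ S) (hpw : p.1 ∈ hyperplane w b) : alpha S S' = 0 := by
  rw [alpha, if_pos ⟨w, b, hsep⟩]
  apply le_antisymm
  · exact sInf_le ⟨w, b, hsep, by rw [linMargin_eq_zero hp hpw, EReal.coe_zero]⟩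
  · apply le_sInf
    rintro _ ⟨w', b', -, rfl⟩
    exact EReal.coe_nonneg.2 (linMargin_nonneg S w' b')

lemma subset_ballAug (hS : LabelsPM S) (hr : 0 ≤ r) : S ⊆ ballAug S r := by
  rintro ⟨x, y⟩ hp
  rcases hS _ hp with rfl | rfl
  · exact Or.inl ⟨rfl, (infDist_zero_of_mem (s := posPts S) hp).trans_le hr⟩
  · exact Or.inr ⟨rfl, (infDist_zero_of_mem (s := negPts S) hp).trans_le hr⟩

lemma Exposes.isLinSep {x : Euc d} (hw : Exposes r w x (posPts S) (negPts S)) (hS : S.Finite)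
    (hx : x ∈ posPts S) (hY : (negPts S).Nonempty) (hT : T ⊆ ballAug S r)
    (hTx : ∀ p ∈ posPts T, dist p x ≤ r → p = x) : IsLinSep w (-⟪w, x⟫) T := by
  refine ⟨hw.ne_zero hY, ?_⟩
  rintro ⟨p, y⟩ hp
  rcases hT hp with ⟨rfl, hpX⟩ | ⟨rfl, hpY⟩
  · obtain ⟨x', hx', hpx'⟩ := exists_dist_le_of_infDist_le (finite_posPts hS).isCompact ⟨x, hx⟩ hpX
    obtain rfl | hne := eq_or_ne x' x
    · simp [hTx p hp hpx']
    · have hx'p := inner_sub_le_mul_norm_of_dist_le (w := w) ((dist_comm x' p).trans_le hpx')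
      have hx'x := hw.1 x' hx' hne
      rw [inner_sub_right] at hx'p hx'x
      linarith
  · obtain ⟨z, hz, hpz⟩ := exists_dist_le_of_infDist_le (finite_negPts hS).isCompact hY hpY
    have hpz' := inner_sub_le_mul_norm_of_dist_le (w := w) hpz
    have hxz := hw.2 z hz
    rw [inner_sub_right] at hpz' hxz
    linarith

theorem alpha_eq_zero_of_allExposed (hlab : LabelsPM S) (hS : S.Finite) (hr : 0 ≤ r)
    (hY : (negPts S).Nonempty) (hexp : AllExposed (2 * r) (posPts S) (negPts S))
    (hS' : S' ⊆ ballAug S r) (hcard : (posPts S').encard < (posPts S).encard) :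
    alpha S S' = 0 := by
  obtain ⟨x, hx, hfar⟩ := exists_forall_lt_dist_of_encard_lt hexp.pairwise_lt_dist hcard
  obtain ⟨w, hw⟩ := hexp x hx
  replace hw : Exposes r w x (posPts S) (negPts S) := hw.mono (by linarith)
  have honly : ∀ p ∈ posPts (S ∪ S'), dist p x ≤ r → p = x := by
    rintro p (hp | hp) hpx
    · by_contra hne
      exact (hw.lt_dist hp hne).not_ge hpx
    · exact absurd hpx (hfar p hp).not_ge
  have hsep : IsLinSep w (-⟪w, x⟫) (S ∪ S') :=
    hw.isLinSep hS hx hY (union_subset (subset_ballAug hlab hr) hS') honly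
  exact alpha_eq_zero_of_mem_hyperplane hsep hx (add_neg_cancel _)

end Margin

/-- Theorem 4 of the paper: for any `n, m ≥ 1` and `r > 0` there is a
training set `S` with `|X₊| = n`, `|X₋| = m` such that any bounded augmentation
`S' ⊆ S_r` which perturbs fewer than `n` positive points has `α(S,S') = 0`. -/
theorem bounded_augmentation_needs_n_points {d : ℕ} (hd : 2 ≤ d)
    (n m : ℕ) (hn : 1 ≤ n) (hm : 1 ≤ m) (r : ℝ) (hr : 0 < r) :
    ∃ S : Set (Euc d × ℝ), LabelsPM S ∧ S.Finite ∧
      (posPts S).ncard = n ∧ (negPts S).ncard = m ∧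
      ∀ S' ⊆ ballAug S r, (posPts S').Finite → (posPts S').ncard < n →
        alpha S S' = 0 := by
  have hv : Orthonormal ℝ (EuclideanSpace.basisFun (Fin d) ℝ ∘ Fin.castLE hd) :=
    (EuclideanSpace.basisFun (Fin d) ℝ).orthonormal.comp _ (Fin.castLE_injective hd)
  obtain ⟨X, Y, hXn, hYm, hexp⟩ := exists_allExposed hv n m (2 * r)
  have hSfin : (labeledSet X Y).Finite :=
    finite_labeledSet (finite_of_encard_eq_coe hXn) (finite_of_encard_eq_coe hYm)
  have hYne : Y.Nonempty := by
    rw [← encard_pos, hYm]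
    exact_mod_cast hm
  refine ⟨labeledSet X Y, labelsPM_labeledSet X Y, hSfin, ?_, ?_, fun S' hS' hfin hcard => ?_⟩
  · simp [posPts_labeledSet, ncard_def, hXn]
  · simp [negPts_labeledSet, ncard_def, hYm]
  · refine alpha_eq_zero_of_allExposed (labelsPM_labeledSet X Y) hSfin hr.le ?_ ?_ hS' ?_
    · rwa [negPts_labeledSet]
    · rwa [posPts_labeledSet, negPts_labeledSet]
    · rw [posPts_labeledSet, hXn, ← hfin.cast_ncard_eq]
      exact_mod_cast hcard
end

section
/- Let S ⊆ ℝ^d × {−1,+1} be a finite, linearly separable training set, and let S' be formed by random spherical perturbations of S: each point of S' has the form (x+z, y) where (x,y) ∈ S and z is drawn uniformly and independently from the sphere of radius r in ℝ^d. Then for all δ ∈ (0,1), with probability at least 1 − δ, the worst-case margin satisfies α(S,S') ≤ (√((2·ln|S'| + 2·ln(1/δ))/d)) · r. -/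
open scoped RealInnerProductSpace ENNReal Classical
open Metric Set MeasureTheory

/-!
Fix `M ≥ 0` and suppose some `(w, b)` separates `S` with margin at least `M`. Sliding its hyperplane
towards one of the classes until that class is at distance exactly `M` gives a separator of `S` with
margin at most `M` that leaves every point of `S` room `M` in the direction `w`. It still separates
`S ∪ S'` unless some perturbation `z k` moves its base point by more than `M` towards the hyperplane,
so outside this event `α(S, S') ≤ M`; and if no such `(w, b)` exists, then `α(S, S') ≤ M` always.

Each perturbation is bad only if, rescaled to the unit sphere, it lies in a fixed cap of height
`T = M / r`. The cone over this cap is contained in a ball of radius `exp (-T² / 2)`, so the cap has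
relative measure at most `exp (-d T² / 2)`, which equals `δ / m` for the `T` of the theorem. A union
bound over the `m` perturbations finishes the proof.
-/

section SphericalCap

lemma exp_le_four_mul {s : ℝ} (hs : 1 / 2 ≤ s) (hs' : s ≤ 1) : Real.exp s ≤ 4 * s := by
  have hexp := (abs_le.1 (Real.abs_exp_sub_one_sub_id_le (abs_le.2 ⟨by linarith, hs'⟩))).2
  nlinarith

-- The two squares are the squared distances from `c • u` to `0` and to a unit vector `x` with
-- `⟪u, x⟫ = T`: up to `T² = 1/2` the height of the cap serves as `c`, beyond it the radius
-- `exp (-T² / 2)` does.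
lemma exists_sq_le_exp_neg_sq {T : ℝ} (hT₀ : 0 ≤ T) (hT₁ : T ≤ 1) :
    ∃ c : ℝ, 0 ≤ c ∧ c ^ 2 ≤ Real.exp (-T ^ 2) ∧ 1 - 2 * c * T + c ^ 2 ≤ Real.exp (-T ^ 2) := by
  rcases le_total (T ^ 2) (1 / 2) with hT | hT
  · have hexp := Real.add_one_le_exp (-T ^ 2)
    exact ⟨T, hT₀, by linarith, by linarith⟩
  · set c := Real.exp (-T ^ 2 / 2) with hc
    have hc_sq : c ^ 2 = Real.exp (-T ^ 2) := by
      rw [hc, ← Real.exp_nat_mul]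
      congr 1
      push_cast
      ring
    have h_four_mul : 1 ≤ 4 * T ^ 2 * c ^ 2 := by
      rw [hc_sq, Real.exp_neg, ← div_eq_mul_inv, one_le_div (Real.exp_pos _)]
      exact exp_le_four_mul hT (pow_le_one₀ hT₀ hT₁)
    have h_two_mul : 1 ≤ 2 * c * T :=
      (one_le_sq_iff₀ (by positivity)).1 (h_four_mul.trans_eq (by ring))
    exact ⟨c, by positivity, hc_sq.le, by linarith⟩

variable {E : Type*} [NormedAddCommGroup E] [InnerProductSpace ℝ E]

lemma exists_cone_subset_closedBall {u : E} (hu : ‖u‖ = 1) {T : ℝ} (hT₀ : 0 ≤ T) (hT₁ : T ≤ 1) :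
    ∃ c : E, ∀ x : E, ‖x‖ = 1 → T ≤ ⟪u, x⟫ → ∀ t ∈ Icc (0 : ℝ) 1,
      t • x ∈ closedBall c (Real.exp (-T ^ 2 / 2)) := by
  obtain ⟨c, hc₀, h_zero, h_unit⟩ := exists_sq_le_exp_neg_sq hT₀ hT₁
  have mem_of_sq_le {y : E} (hy : ‖y - c • u‖ ^ 2 ≤ Real.exp (-T ^ 2)) :
      y ∈ closedBall (c • u) (Real.exp (-T ^ 2 / 2)) := by
    rw [mem_closedBall, dist_eq_norm, Real.exp_half]
    exact Real.le_sqrt_of_sq_le hy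
  refine ⟨c • u, fun x hx hux t ht =>
    (convex_closedBall _ _).smul_mem_of_zero_mem (mem_of_sq_le ?_) (mem_of_sq_le ?_) ht⟩
  · rwa [zero_sub, norm_neg, norm_smul, hu, mul_one, Real.norm_eq_abs, sq_abs]
  · calc ‖x - c • u‖ ^ 2 = 1 - 2 * c * ⟪u, x⟫ + c ^ 2 := by
          rw [norm_sub_sq_real, real_inner_smul_right, real_inner_comm, norm_smul, hx, hu, mul_one,
            Real.norm_eq_abs, sq_abs]
          ring
      _ ≤ 1 - 2 * c * T + c ^ 2 := by gcongr
      _ ≤ Real.exp (-T ^ 2) := h_unit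

variable [MeasurableSpace E] [BorelSpace E] [FiniteDimensional ℝ E]
  (μ : Measure E) [μ.IsAddHaarMeasure]

open scoped Pointwise in
lemma toSphere_cap_le {u : E} (hu : ‖u‖ = 1) {T : ℝ} (hT₀ : 0 ≤ T) :
    μ.toSphere {x | T ≤ ⟪u, (x : E)⟫} ≤
      ENNReal.ofReal (Real.exp (-(Module.finrank ℝ E * T ^ 2 / 2))) * μ.toSphere univ := by
  rcases le_or_gt T 1 with hT₁ | hT₁
  · obtain ⟨c, hc⟩ := exists_cone_subset_closedBall hu hT₀ hT₁
    have hmeas : MeasurableSet {x : sphere (0 : E) 1 | T ≤ ⟪u, (x : E)⟫} :=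
      (isClosed_le (by fun_prop) (by fun_prop)).measurableSet
    have hcone : Ioo (0 : ℝ) 1 • ((↑) '' {x : sphere (0 : E) 1 | T ≤ ⟪u, (x : E)⟫} : Set E) ⊆
        closedBall c (Real.exp (-T ^ 2 / 2)) := by
      rintro _ ⟨t, ht, _, ⟨x, hx, rfl⟩, rfl⟩
      exact hc x (norm_eq_of_mem_sphere x) hx t (Ioo_subset_Icc_self ht)
    have hradius : Real.exp (-T ^ 2 / 2) ^ Module.finrank ℝ E =
        Real.exp (-(Module.finrank ℝ E * T ^ 2 / 2)) := by
      rw [← Real.exp_nat_mul]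
      ring_nf
    rw [μ.toSphere_apply' hmeas, μ.toSphere_apply_univ, mul_left_comm]
    gcongr
    exact (measure_mono hcone).trans_eq
      (by rw [μ.addHaar_closedBall _ (Real.exp_pos _).le, hradius])
  · have hempty : {x : sphere (0 : E) 1 | T ≤ ⟪u, (x : E)⟫} = ∅ := by
      refine eq_empty_of_forall_notMem fun x hx => hT₁.not_ge (hx.trans ?_)
      simpa [hu] using real_inner_le_norm u (x : E)
    simp [hempty]

end SphericalCap

section UniformSphere

variable {d : ℕ}

lemma uniformSphere_apply (r : ℝ) {s : Set (Euc d)} (hs : MeasurableSet s) :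
    uniformSphere d r s = ((volume : Measure (Euc d)).toSphere univ)⁻¹ *
      (volume : Measure (Euc d)).toSphere {x : sphere 0 1 | r • (x : Euc d) ∈ s} := by
  have hsmul : Measurable fun x : Euc d => r • x := by fun_prop
  rw [uniformSphere, Measure.smul_apply, Measure.map_apply hsmul hs,
    Measure.map_apply measurable_subtype_coe (hsmul hs), smul_eq_mul]
  rfl

lemma isProbabilityMeasure_uniformSphere (hd : 0 < d) (r : ℝ) :
    IsProbabilityMeasure (uniformSphere d r) := by
  have hne : (volume : Measure (Euc d)).toSphere univ ≠ 0 := by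
    rw [Measure.measure_univ_ne_zero, Ne, Measure.toSphere_eq_zero_iff_finrank,
      finrank_euclideanSpace_fin]
    exact hd.ne'
  refine ⟨?_⟩
  simpa [uniformSphere_apply] using ENNReal.inv_mul_cancel hne (measure_ne_top _ _)

lemma uniformSphere_cap_le {r : ℝ} (hr : 0 < r) {v : Euc d} (hv : v ≠ 0) {T : ℝ} (hT : 0 ≤ T) :
    uniformSphere d r {z | T * r * ‖v‖ ≤ ⟪v, z⟫} ≤
      ENNReal.ofReal (Real.exp (-(d * T ^ 2 / 2))) := by
  have hmeas : MeasurableSet {z : Euc d | T * r * ‖v‖ ≤ ⟪v, z⟫} :=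
    (isClosed_le (by fun_prop) (by fun_prop)).measurableSet
  have hcap :
      {x : sphere (0 : Euc d) 1 | r • (x : Euc d) ∈ {z : Euc d | T * r * ‖v‖ ≤ ⟪v, z⟫}} =
        ({x | T ≤ ⟪‖v‖⁻¹ • v, (x : Euc d)⟫} : Set (sphere (0 : Euc d) 1)) := by
    ext x
    simp only [mem_ofPred_eq, real_inner_smul_left, real_inner_smul_right]
    rw [inv_mul_eq_div, le_div_iff₀ (norm_pos_iff.2 hv), mul_right_comm, mul_comm _ r,
      mul_le_mul_iff_right₀ hr]
  rw [uniformSphere_apply r hmeas, hcap, mul_comm, ← div_eq_mul_inv]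
  refine ENNReal.div_le_of_le_mul ?_
  simpa using toSphere_cap_le (volume : Measure (Euc d)) (norm_smul_inv_norm (𝕜 := ℝ) hv) hT

end UniformSphere

section Margin

variable {d : ℕ} {S S' : Set (Euc d × ℝ)} {w : Euc d} {b M : ℝ}

lemma infDist_hyperplane_mul_norm_le (w : Euc d) (b : ℝ) (x : Euc d) :
    infDist x (hyperplane w b) * ‖w‖ ≤ |⟪w, x⟫ + b| := by
  rcases eq_or_ne w 0 with rfl | hw
  · simp
  have hw' : ‖w‖ ≠ 0 := norm_ne_zero_iff.2 hw
  set c := (⟪w, x⟫ + b) / ‖w‖ ^ 2 with hc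
  have hfoot : x - c • w ∈ hyperplane w b := by
    simp only [hyperplane, mem_ofPred_eq, inner_sub_right, real_inner_smul_right,
      real_inner_self_eq_norm_sq, hc]
    field_simp
    ring
  calc infDist x (hyperplane w b) * ‖w‖ ≤ dist x (x - c • w) * ‖w‖ := by
        gcongr
        exact infDist_le_dist_of_mem hfoot
    _ = |c * ‖w‖ ^ 2| := by
        rw [dist_eq_norm, sub_sub_cancel, norm_smul, Real.norm_eq_abs, abs_mul, abs_sq]
        ring
    _ = |⟪w, x⟫ + b| := by rw [hc, div_mul_cancel₀ _ (pow_ne_zero 2 hw')]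

lemma linMargin_mul_norm_le (w : Euc d) (b : ℝ) {p : Euc d × ℝ} (hp : p ∈ S) :
    linMargin S w b * ‖w‖ ≤ |⟪w, p.1⟫ + b| := by
  have hbdd : BddBelow (range fun q : S => infDist (q : Euc d × ℝ).1 (hyperplane w b)) :=
    ⟨0, forall_mem_range.2 fun _ => infDist_nonneg⟩
  exact (mul_le_mul_of_nonneg_right (ciInf_le hbdd ⟨p, hp⟩) (norm_nonneg w)).trans
    (infDist_hyperplane_mul_norm_le w b p.1)

lemma LabelsPM.abs_eq_one (hS : LabelsPM S) {p : Euc d × ℝ} (hp : p ∈ S) : |p.2| = 1 := by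
  rcases hS p hp with h | h <;> simp [h]

lemma LabelsPM.mul_eq_abs (hS : LabelsPM S) {p : Euc d × ℝ} (hp : p ∈ S) {a : ℝ}
    (ha : 0 ≤ p.2 * a) : p.2 * a = |a| := by
  rw [← abs_of_nonneg ha, abs_mul, hS.abs_eq_one hp, one_mul]

lemma IsLinSep.mul_norm_le_of_le_linMargin (hw : IsLinSep w b S) (hS : LabelsPM S)
    (hM : M ≤ linMargin S w b) {p : Euc d × ℝ} (hp : p ∈ S) :
    M * ‖w‖ ≤ p.2 * (⟪w, p.1⟫ + b) := by
  rw [hS.mul_eq_abs hp (hw.2 p hp)]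
  exact (mul_le_mul_of_nonneg_right hM (norm_nonneg w)).trans (linMargin_mul_norm_le w b hp)

lemma exists_bias_linMargin_le (hS : LabelsPM S) (hne : S.Nonempty) (hw : IsLinSep w b S)
    (hM₀ : 0 ≤ M) (hM : M ≤ linMargin S w b) :
    ∃ b', linMargin S w b' ≤ M ∧ ∀ p ∈ S, M * ‖w‖ ≤ p.2 * (⟪w, p.1⟫ + b') := by
  obtain ⟨p₀, hp₀⟩ := hne
  have hfar : ∀ p ∈ S, M * ‖w‖ ≤ p.2 * (⟪w, p.1⟫ + b) := fun p hp =>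
    hw.mul_norm_le_of_le_linMargin hS hM hp
  let f : {p // p ∈ S ∧ p.2 = p₀.2} → ℝ := fun p => p.1.2 * (⟪w, p.1.1⟫ + b)
  have : Nonempty {p // p ∈ S ∧ p.2 = p₀.2} := ⟨⟨p₀, hp₀, rfl⟩⟩
  have hf : BddBelow (range f) := ⟨M * ‖w‖, forall_mem_range.2 fun p => hfar p p.2.1⟩
  set a := (⨅ p, f p) - M * ‖w‖
  have ha₀ : 0 ≤ a := sub_nonneg.2 (le_ciInf fun p => hfar p p.2.1)
  have hsq : p₀.2 * p₀.2 = 1 := by rw [← abs_mul_abs_self, hS.abs_eq_one hp₀, one_mul]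
  have hslide : ∀ p : Euc d × ℝ, p.2 = p₀.2 →
      p.2 * (⟪w, p.1⟫ + (b - p₀.2 * a)) = p.2 * (⟪w, p.1⟫ + b) - a := fun p hp => by
    linear_combination -a * p₀.2 * hp - a * hsq
  have hroom : ∀ p ∈ S, M * ‖w‖ ≤ p.2 * (⟪w, p.1⟫ + (b - p₀.2 * a)) := fun p hp => by
    rcases abs_eq_abs.1 ((hS.abs_eq_one hp).trans (hS.abs_eq_one hp₀).symm) with h_same | h_opp
    · have hinf : ⨅ q, f q ≤ p.2 * (⟪w, p.1⟫ + b) := ciInf_le hf ⟨p, hp, h_same⟩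
      rw [hslide p h_same]
      linarith
    · have hopp : p.2 * (⟪w, p.1⟫ + (b - p₀.2 * a)) = p.2 * (⟪w, p.1⟫ + b) + a := by
        linear_combination -a * p₀.2 * h_opp + a * hsq
      linarith [hfar p hp]
  refine ⟨b - p₀.2 * a, ?_, hroom⟩
  refine le_of_mul_le_mul_right ?_ (norm_pos_iff.2 hw.1)
  have hinf : linMargin S w (b - p₀.2 * a) * ‖w‖ + a ≤ ⨅ p, f p := le_ciInf fun p => by
    have hp := linMargin_mul_norm_le w (b - p₀.2 * a) p.2.1
    rw [← hS.mul_eq_abs p.2.1 ((by positivity : 0 ≤ M * ‖w‖).trans (hroom p p.2.1)),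
      hslide p p.2.2] at hp
    linarith
  linarith

lemma alpha_le_of_isLinSep (hw : IsLinSep w b (S ∪ S')) (hM : linMargin S w b ≤ M) :
    alpha S S' ≤ (M : EReal) := by
  rw [alpha, if_pos ⟨w, b, hw⟩]
  refine (sInf_le ?_).trans (EReal.coe_le_coe_iff.2 hM)
  exact ⟨w, b, hw, rfl⟩

lemma alpha_le_of_forall_linMargin_le (hM : ∀ w b, IsLinSep w b S → linMargin S w b ≤ M) :
    alpha S S' ≤ (M : EReal) := by
  by_cases hsep : ∃ w b, IsLinSep w b (S ∪ S')
  · obtain ⟨w, b, hw⟩ := hsep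
    exact alpha_le_of_isLinSep hw (hM w b ⟨hw.1, fun p hp => hw.2 p (Or.inl hp)⟩)
  · rw [alpha, if_neg hsep]
    exact bot_le

lemma isLinSep_union_perturbation {ι : Type*} (hw : w ≠ 0) (hM : 0 ≤ M)
    (hroom : ∀ p ∈ S, M * ‖w‖ ≤ p.2 * (⟪w, p.1⟫ + b)) {base : ι → Euc d × ℝ}
    (hbase : ∀ k, base k ∈ S) {z : ι → Euc d} (hz : ∀ k, -(M * ‖w‖) ≤ (base k).2 * ⟪w, z k⟫) :
    IsLinSep w b (S ∪ range fun k => ((base k).1 + z k, (base k).2)) := by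
  refine ⟨hw, ?_⟩
  rintro p (hp | ⟨k, rfl⟩)
  · exact (by positivity : 0 ≤ M * ‖w‖).trans (hroom p hp)
  · rw [inner_add_right]
    linarith [hroom _ (hbase k), hz k]

lemma exists_direction_alpha_perturbation_le {ι : Type*} (hd : 0 < d) (hS : LabelsPM S)
    (hne : S.Nonempty) (hM : 0 ≤ M) {base : ι → Euc d × ℝ} (hbase : ∀ k, base k ∈ S) :
    ∃ w : Euc d, w ≠ 0 ∧ ∀ z : ι → Euc d, (∀ k, -(M * ‖w‖) ≤ (base k).2 * ⟪w, z k⟫) →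
      alpha S (range fun k => ((base k).1 + z k, (base k).2)) ≤ (M : EReal) := by
  by_cases hex : ∃ w b, IsLinSep w b S ∧ M ≤ linMargin S w b
  · obtain ⟨w, b, hw, hMw⟩ := hex
    obtain ⟨b', hb', hroom⟩ := exists_bias_linMargin_le hS hne hw hM hMw
    exact ⟨w, hw.1, fun z hz =>
      alpha_le_of_isLinSep (isLinSep_union_perturbation hw.1 hM hroom hbase hz) hb'⟩
  · push Not at hex
    have : Nonempty (Fin d) := ⟨⟨0, hd⟩⟩
    obtain ⟨w, hw⟩ := exists_ne (0 : Euc d)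
    exact ⟨w, hw, fun z _ => alpha_le_of_forall_linMargin_le fun w b h => (hex w b h).le⟩

end Margin

lemma one_sub_sum_le_measure_pi {ι : Type*} [Fintype ι] {Ω : ι → Type*}
    [∀ i, MeasurableSpace (Ω i)] (μ : ∀ i, Measure (Ω i)) [∀ i, IsProbabilityMeasure (μ i)]
    (B : ∀ i, Set (Ω i)) :
    1 - ∑ i, μ i (B i) ≤ Measure.pi μ {z | ∀ i, z i ∉ B i} := by
  have hbad : {z : ∀ i, Ω i | ∀ i, z i ∉ B i}ᶜ = ⋃ i, Function.eval i ⁻¹' B i := by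
    ext z
    simp
  have hunion : Measure.pi μ {z | ∀ i, z i ∉ B i}ᶜ ≤ ∑ i, μ i (B i) := by
    rw [hbad]
    refine (measure_iUnion_fintype_le _ _).trans (Finset.sum_le_sum fun i _ => ?_)
    have hmap := (measurePreserving_eval μ i).map_eq
    exact (Measure.le_map_apply (measurable_pi_apply i).aemeasurable _).trans_eq (by rw [hmap])
  rw [tsub_le_iff_right]
  calc 1 = Measure.pi μ univ := measure_univ.symm
    _ ≤ Measure.pi μ {z | ∀ i, z i ∉ B i} + Measure.pi μ {z | ∀ i, z i ∉ B i}ᶜ :=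
        measure_univ_le_add_compl _
    _ ≤ _ := by gcongr

lemma exp_neg_mul_sq_sqrt_log {d n δ : ℝ} (hd : 0 < d) (hn : 1 ≤ n) (hδ₀ : 0 < δ) (hδ₁ : δ ≤ 1) :
    Real.exp (-(d * √((2 * Real.log n + 2 * Real.log (1 / δ)) / d) ^ 2 / 2)) = δ / n := by
  have hlog_n : 0 ≤ Real.log n := Real.log_nonneg hn
  have hlog_δ : 0 ≤ Real.log (1 / δ) := Real.log_nonneg ((one_le_div hδ₀).2 hδ₁)
  rw [Real.sq_sqrt (by positivity), ← Real.exp_log (by positivity : 0 < δ / n),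
    Real.log_div hδ₀.ne' (by positivity), one_div, Real.log_inv]
  congr 1
  field_simp
  ring

lemma ofReal_one_sub_le_pi_uniformSphere {d : ℕ} (hd : 0 < d) {r : ℝ} (hr : 0 < r) {m : ℕ}
    (hm : 0 < m) {v : Fin m → Euc d} (hv : ∀ k, v k ≠ 0) {δ : ℝ} (hδ : δ ∈ Ioo (0 : ℝ) 1) :
    ENNReal.ofReal (1 - δ) ≤ (Measure.pi fun _ : Fin m => uniformSphere d r)
      {z | ∀ k, ⟪v k, z k⟫ < √((2 * Real.log m + 2 * Real.log (1 / δ)) / d) * r * ‖v k‖} := by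
  have := isProbabilityMeasure_uniformSphere hd r
  let B : Fin m → Set (Euc d) := fun k =>
    {x | √((2 * Real.log m + 2 * Real.log (1 / δ)) / d) * r * ‖v k‖ ≤ ⟪v k, x⟫}
  have hB : ∀ k, uniformSphere d r (B k) ≤ ENNReal.ofReal (δ / m) := fun k => by
    rw [← exp_neg_mul_sq_sqrt_log (Nat.cast_pos.2 hd) (Nat.one_le_cast.2 hm) hδ.1 hδ.2.le]
    exact uniformSphere_cap_le hr (hv k) (Real.sqrt_nonneg _)
  have hsum : ∑ k, uniformSphere d r (B k) ≤ ENNReal.ofReal δ := by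
    refine (Finset.sum_le_sum fun k _ => hB k).trans_eq ?_
    rw [Finset.sum_const, Finset.card_univ, Fintype.card_fin, ← ENNReal.ofReal_nsmul,
      nsmul_eq_mul, mul_div_cancel₀ _ (by positivity)]
  calc ENNReal.ofReal (1 - δ) = 1 - ENNReal.ofReal δ := by
        rw [ENNReal.ofReal_sub _ hδ.1.le, ENNReal.ofReal_one]
    _ ≤ 1 - ∑ k, uniformSphere d r (B k) := tsub_le_tsub_left hsum 1
    _ ≤ Measure.pi (fun _ => uniformSphere d r) {z | ∀ k, z k ∉ B k} :=
        one_sub_sum_le_measure_pi _ B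
    _ = _ := by simp only [B, mem_ofPred_eq, not_le]

theorem random_perturbation_margin_upper_bound_general {d : ℕ} (hd : 0 < d)
    (S : Set (Euc d × ℝ)) (hSlab : LabelsPM S) (r : ℝ) (hr : 0 < r) (m : ℕ) (hm : 0 < m)
    (base : Fin m → Euc d × ℝ) (hbase : ∀ k, base k ∈ S)
    (δ : ℝ) (hδ : δ ∈ Set.Ioo (0 : ℝ) 1) :
    ENNReal.ofReal (1 - δ) ≤
      (Measure.pi fun _ : Fin m => uniformSphere d r)
        {z | alpha S (Set.range fun k => ((base k).1 + z k, (base k).2)) ≤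
          ((Real.sqrt ((2 * Real.log m + 2 * Real.log (1 / δ)) / d) * r : ℝ) : EReal)} := by
  obtain ⟨w, hw, hgood⟩ := exists_direction_alpha_perturbation_le hd hSlab ⟨_, hbase ⟨0, hm⟩⟩
    (by positivity : 0 ≤ √((2 * Real.log m + 2 * Real.log (1 / δ)) / d) * r) hbase
  have hnorm : ∀ k, ‖-(base k).2 • w‖ = ‖w‖ := fun k => by
    simp [norm_smul, hSlab.abs_eq_one (hbase k)]
  have hv : ∀ k, -(base k).2 • w ≠ 0 := fun k =>
    norm_ne_zero_iff.1 ((hnorm k).trans_ne (norm_ne_zero_iff.2 hw))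
  refine (ofReal_one_sub_le_pi_uniformSphere hd hr hm hv hδ).trans
    (measure_mono fun z hz => hgood z fun k => ?_)
  have hzk := hz k
  rw [hnorm k, real_inner_smul_left] at hzk
  linarith

/-- Theorem 7 of the paper: if `S'` consists of `m` random spherical
perturbations of radius `r` of points of the linearly separable set `S`, then with
probability at least `1 - δ`,
`α(S,S') ≤ √((2 ln|S'| + 2 ln(1/δ))/d) · r`. -/
theorem random_perturbation_margin_upper_bound {d : ℕ} (hd : 0 < d)
    (S : Set (Euc d × ℝ)) (hSfin : S.Finite) (hSlab : LabelsPM S)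
    (hpos : (posPts S).Nonempty) (hneg : (negPts S).Nonempty)
    (hsep : ∃ w b, IsLinSep w b S)
    (r : ℝ) (hr : 0 < r) (m : ℕ) (hm : 0 < m)
    (base : Fin m → Euc d × ℝ) (hbase : ∀ k, base k ∈ S)
    (δ : ℝ) (hδ : δ ∈ Set.Ioo (0 : ℝ) 1) :
    ENNReal.ofReal (1 - δ) ≤
      (Measure.pi fun _ : Fin m => uniformSphere d r)
        {z | alpha S (Set.range fun k => ((base k).1 + z k, (base k).2)) ≤
          ((Real.sqrt ((2 * Real.log m + 2 * Real.log (1 / δ)) / d) * r : ℝ) : EReal)} :=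
  random_perturbation_margin_upper_bound_general hd S hSlab r hr m hm base hbase δ hδ
end

section
/- Let S ⊆ ℝ^d × {−1,+1} be a finite separable training set and S' ⊆ ℝ^d × {−1,+1} an artificial set with X₊' = {x : (x,1) ∈ S'} and X₋' = {x : (x,−1) ∈ S'}. If |X₊'| ≤ d or |X₋'| ≤ d, then for every ε ∈ [0,∞], either R_ε(S ∪ S') = ∅, or there exists f ∈ R_ε(S ∪ S') with γ_f(S,S') = 0. -/
open scoped RealInnerProductSpace ENNReal Classical
open Metric Set MeasureTheory

/-!
A set `Y` of at most `d ≠ 0` points of `ℝ^d` lies in some hyperplane `{ℓ = c}`. If `X` is nonempty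
and bounded, `ℓ` therefore attains its maximum or its minimum over the convex hull of `X ∪ Y` at a
point of `closure X`, and that point is not interior to the hull. Take for `X` and `Y` the points of
`S` and of `S'` with a fixed label `y`. The classifier that predicts `y` only where it is forced to
predicts `-y` outside the hull, hence arbitrarily close to points of `S` labeled `y`.
-/

section Convex

theorem vectorSpan_lt_top_of_ncard_le_finrank {k V P : Type*} [DivisionRing k]
    [AddCommGroup V] [Module k V] [Nontrivial V] [AddTorsor V P] {Y : Set P} (hY : Y.Finite)
    (hcard : Y.ncard ≤ Module.finrank k V) : vectorSpan k Y < ⊤ := by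
  rcases Y.eq_empty_or_nonempty with rfl | hYne
  · simp [bot_lt_top]
  have := hY.fintype
  have hpos : 0 < Y.ncard := (ncard_pos hY).2 hYne
  have hdim : Module.finrank k (vectorSpan k Y) ≤ Y.ncard - 1 := by
    have hFintype : Fintype.card Y = Y.ncard - 1 + 1 := by
      rw [← Nat.card_eq_fintype_card, Nat.card_coe_set_eq]
      omega
    have hrange := finrank_vectorSpan_range_le k (Subtype.val : Y → P) hFintype
    rwa [Subtype.range_coe] at hrange
  exact Submodule.lt_top_of_finrank_lt_finrank (by omega)

variable {E : Type*} [NormedAddCommGroup E] [NormedSpace ℝ E]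

theorem notMem_interior_of_isExtrOn {ℓ : E →L[ℝ] ℝ} (hℓ : ℓ ≠ 0) {K : Set E} {x : E}
    (hx : IsExtrOn ℓ K x) : x ∉ interior K := fun hxK =>
  hℓ ((hx.isLocalExtr (mem_interior_iff_mem_nhds.1 hxK)).hasFDerivAt_eq_zero ℓ.hasFDerivAt)

theorem exists_mem_closure_isExtrOn_convexHull_union [ProperSpace E] (ℓ : E →L[ℝ] ℝ) {c : ℝ}
    {X Y : Set E} (hX : Bornology.IsBounded X) (hXne : X.Nonempty) (hY : ∀ y ∈ Y, ℓ y = c) :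
    ∃ x ∈ closure X, IsExtrOn ℓ (convexHull ℝ (X ∪ Y)) x := by
  obtain ⟨xmin, hmin_mem, hmin⟩ :=
    hX.isCompact_closure.exists_isMinOn hXne.closure ℓ.continuous.continuousOn
  obtain ⟨xmax, hmax_mem, hmax⟩ :=
    hX.isCompact_closure.exists_isMaxOn hXne.closure ℓ.continuous.continuousOn
  rcases le_total c (ℓ xmax) with hc | hc
  · refine ⟨xmax, hmax_mem, .inr <| convexHull_min (union_subset ?_ ?_) <|
      convex_halfSpace_le ℓ.isLinear (ℓ xmax)⟩
    · exact fun x hx => hmax (subset_closure hx)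
    · exact fun y hy => (hY y hy).trans_le hc
  · refine ⟨xmin, hmin_mem, .inl <| convexHull_min (union_subset ?_ ?_) <|
      convex_halfSpace_ge ℓ.isLinear (ℓ xmin)⟩
    · exact fun x hx => hmin (subset_closure hx)
    · exact fun y hy => (hmax hmin_mem).trans (hc.trans_eq (hY y hy).symm)

variable [FiniteDimensional ℝ E] [Nontrivial E]

theorem exists_ne_zero_forall_apply_eq {Y : Set E} (hY : Y.Finite)
    (hcard : Y.ncard ≤ Module.finrank ℝ E) :
    ∃ ℓ : E →L[ℝ] ℝ, ℓ ≠ 0 ∧ ∃ c, ∀ y ∈ Y, ℓ y = c := by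
  obtain ⟨ℓ, hℓ, hker⟩ := Submodule.exists_le_ker_of_lt_top _
    (vectorSpan_lt_top_of_ncard_le_finrank hY hcard)
  refine ⟨ℓ.toContinuousLinearMap, by simpa using hℓ, ?_⟩
  rcases Y.eq_empty_or_nonempty with rfl | ⟨y₀, hy₀⟩
  · simp
  · refine ⟨ℓ y₀, fun y hy => ?_⟩
    have hdiff : ℓ (y - y₀) = 0 := hker (vsub_mem_vectorSpan ℝ hy hy₀)
    rwa [map_sub, sub_eq_zero] at hdiff

theorem exists_mem_closure_notMem_interior_convexHull_union {X Y : Set E}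
    (hX : Bornology.IsBounded X) (hXne : X.Nonempty) (hY : Y.Finite)
    (hcard : Y.ncard ≤ Module.finrank ℝ E) :
    ∃ x ∈ closure X, x ∉ interior (convexHull ℝ (X ∪ Y)) := by
  have := FiniteDimensional.proper_real E
  obtain ⟨ℓ, hℓ, c, hc⟩ := exists_ne_zero_forall_apply_eq hY hcard
  obtain ⟨x, hx, hextr⟩ := exists_mem_closure_isExtrOn_convexHull_union ℓ hX hXne hc
  exact ⟨x, hx, notMem_interior_of_isExtrOn hℓ hextr⟩

end Convex

section Classifier

variable {d : ℕ} {ε : ℝ≥0∞} {f : Euc d → ℝ} {S S' T : Set (Euc d × ℝ)}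
  {x : Euc d} {y : ℝ}

/-- The points of `T` with label `y`. `posPts` and `negPts` are definitionally the cases `y = 1`
and `y = -1`, so that both signs can be treated at once. -/
def labelPts (T : Set (Euc d × ℝ)) (y : ℝ) : Set (Euc d) := {x | (x, y) ∈ T}

/-- The union of the convex hulls of the subsets of `X` of circumradius at most `ε`: the region in
which an `ε`-respectful classifier is forced to predict the label shared by the points of `X`. -/
def circumHull (ε : ℝ≥0∞) (X : Set (Euc d)) : Set (Euc d) :=
  {x | ∃ A ⊆ X, circumradius A ≤ ε ∧ x ∈ convexHull ℝ A}

/-- The classifier predicting `y` only on the region where `ε`-respectfulness of `T` forces it. -/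
noncomputable def minimalClassifier (ε : ℝ≥0∞) (T : Set (Euc d × ℝ)) (y : ℝ) : Euc d → ℝ :=
  fun x => if x ∈ circumHull ε (labelPts T y) then y else -y

theorem circumradius_singleton (x : Euc d) : circumradius {x} = 0 :=
  le_antisymm (iInf_le_of_le x (by simp)) bot_le

theorem subset_circumHull (ε : ℝ≥0∞) (X : Set (Euc d)) : X ⊆ circumHull ε X := fun x hx =>
  ⟨{x}, singleton_subset_iff.2 hx, by simp [circumradius_singleton], by simp⟩

theorem circumHull_subset_convexHull (ε : ℝ≥0∞) (X : Set (Euc d)) :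
    circumHull ε X ⊆ convexHull ℝ X := by
  rintro x ⟨A, hAX, -, hx⟩
  exact convexHull_mono hAX hx

theorem respectfulOf_iff : RespectfulOf ε f T ↔
    ∀ y, y = 1 ∨ y = -1 → ∀ x ∈ circumHull ε (labelPts T y), f x = y := by
  constructor
  · rintro ⟨hpos, hneg⟩ y (rfl | rfl) x ⟨A, hA, hr, hx⟩
    exacts [hpos A hA hr x hx, hneg A hA hr x hx]
  · intro h
    exact ⟨fun A hA hr x hx => h 1 (.inl rfl) x ⟨A, hA, hr, hx⟩,
      fun A hA hr x hx => h (-1) (.inr rfl) x ⟨A, hA, hr, hx⟩⟩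

theorem RespectfulOf.separates (hf : RespectfulOf ε f T) (hT : LabelsPM T) : Separates f T :=
  fun p hp => respectfulOf_iff.1 hf p.2 (hT p hp) p.1 (subset_circumHull ε _ hp)

theorem nontrivial_of_separates (hf : Separates f T) (hpos : (posPts T).Nonempty)
    (hneg : (negPts T).Nonempty) : Nontrivial (Euc d) := by
  obtain ⟨x, hx⟩ := hpos
  obtain ⟨z, hz⟩ := hneg
  refine nontrivial_of_ne x z ?_
  rintro rfl
  have hcontra : (1 : ℝ) = -1 := (hf _ hx).symm.trans (hf _ hz)
  norm_num at hcontra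

theorem minimalClassifier_mem_respectfulSet (hne : (respectfulSet ε T).Nonempty)
    (hy : y = 1 ∨ y = -1) : minimalClassifier ε T y ∈ respectfulSet ε T := by
  obtain ⟨g, -, hg⟩ := hne
  rw [respectfulOf_iff] at hg
  refine ⟨fun x => ?_, respectfulOf_iff.2 fun y' hy' x hx => ?_⟩
  · grind [minimalClassifier]
  · have hagree : x ∈ circumHull ε (labelPts T y) → y' = y := fun hx' =>
      (hg y' hy' x hx).symm.trans (hg y hy x hx')
    grind [minimalClassifier]

theorem compl_convexHull_subset_preimage_minimalClassifier (ε : ℝ≥0∞) (T : Set (Euc d × ℝ))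
    (y : ℝ) : (convexHull ℝ (labelPts T y))ᶜ ⊆ minimalClassifier ε T y ⁻¹' {-y} :=
  fun _ hx => if_neg fun hx' => hx (circumHull_subset_convexHull ε _ hx')

theorem clsMargin_eq_zero (hx : x ∈ closure (labelPts S y)) (hfx : x ∈ closure (f ⁻¹' {-y})) :
    clsMargin f S = 0 := by
  have hle : labelPts S y ⊆ {z | clsMargin f S ≤ infDist z (f ⁻¹' {-y})} := fun z hz =>
    ciInf_le ⟨0, forall_mem_range.2 fun _ => infDist_nonneg⟩ (⟨(z, y), hz⟩ : S)
  have hclosed : IsClosed {z | clsMargin f S ≤ infDist z (f ⁻¹' {-y})} :=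
    isClosed_le continuous_const (continuous_infDist_pt _)
  refine le_antisymm ?_ (Real.iInf_nonneg fun _ => infDist_nonneg)
  exact (closure_minimal hle hclosed hx).trans_eq (infDist_zero_of_mem_closure hfx)

theorem clsMargin_minimalClassifier_eq_zero [Nontrivial (Euc d)] (ε : ℝ≥0∞)
    (hS : Bornology.IsBounded S) (hne : (labelPts S y).Nonempty)
    (hfin : (labelPts S' y).Finite) (hcard : (labelPts S' y).ncard ≤ d) :
    clsMargin (minimalClassifier ε (S ∪ S') y) S = 0 := by
  have hbdd : Bornology.IsBounded (labelPts S y) :=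
    hS.image_fst.subset fun x hx => ⟨(x, y), hx, rfl⟩
  obtain ⟨x, hx, hxint⟩ : ∃ x ∈ closure (labelPts S y),
      x ∉ interior (convexHull ℝ (labelPts (S ∪ S') y)) :=
    exists_mem_closure_notMem_interior_convexHull_union hbdd hne hfin
      (by rwa [finrank_euclideanSpace_fin])
  rw [← mem_compl_iff, ← closure_compl] at hxint
  exact clsMargin_eq_zero hx <|
    closure_mono (compl_convexHull_subset_preimage_minimalClassifier ε _ y) hxint

end Classifier

theorem nonlinear_augmentation_size_lower_bound_general {d : ℕ} (S S' : Set (Euc d × ℝ))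
    (hS : Bornology.IsBounded S) (hSlab : LabelsPM S)
    (hpos : (posPts S).Nonempty) (hneg : (negPts S).Nonempty) (hS'lab : LabelsPM S')
    (hcard : ((posPts S').Finite ∧ (posPts S').ncard ≤ d) ∨
             ((negPts S').Finite ∧ (negPts S').ncard ≤ d)) (ε : ℝ≥0∞) :
    respectfulSet ε (S ∪ S') = ∅ ∨
      ∃ f ∈ respectfulSet ε (S ∪ S'), clsMarginAug f S S' = 0 := by
  refine (eq_empty_or_nonempty _).imp_right fun hne => ?_
  have hlab : LabelsPM (S ∪ S') := fun p hp => hp.elim (hSlab p) (hS'lab p)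
  have : Nontrivial (Euc d) :=
    let ⟨_, _, hg⟩ := hne
    nontrivial_of_separates (fun p hp => hg.separates hlab p (.inl hp)) hpos hneg
  obtain ⟨y, hy, hmargin⟩ : ∃ y, (y = 1 ∨ y = -1) ∧
      clsMargin (minimalClassifier ε (S ∪ S') y) S = 0 := by
    rcases hcard with ⟨hfin, hle⟩ | ⟨hfin, hle⟩
    · exact ⟨1, .inl rfl, clsMargin_minimalClassifier_eq_zero ε hS hpos hfin hle⟩
    · exact ⟨-1, .inr rfl, clsMargin_minimalClassifier_eq_zero ε hS hneg hfin hle⟩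
  have hmem := minimalClassifier_mem_respectfulSet hne hy
  refine ⟨_, hmem, ?_⟩
  rw [clsMarginAug, if_pos (hmem.2.separates hlab), hmargin, EReal.coe_zero]

/-- Theorem 12 of the paper: if `|X₊'| ≤ d` or `|X₋'| ≤ d`, then for
every `ε ∈ [0,∞]` either `R_ε(S ∪ S') = ∅` or some `f ∈ R_ε(S ∪ S')` has
`γ_f(S,S') = 0`. -/
theorem nonlinear_augmentation_size_lower_bound {d : ℕ} (S S' : Set (Euc d × ℝ))
    (hSfin : S.Finite) (hSlab : LabelsPM S)
    (hpos : (posPts S).Nonempty) (hneg : (negPts S).Nonempty)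
    (hS'lab : LabelsPM S')
    (hsep : ∃ f, IsClassifier f ∧ Separates f S)
    (hcard : ((posPts S').Finite ∧ (posPts S').ncard ≤ d) ∨
             ((negPts S').Finite ∧ (negPts S').ncard ≤ d)) :
    ∀ ε : ℝ≥0∞, respectfulSet ε (S ∪ S') = ∅ ∨
      ∃ f ∈ respectfulSet ε (S ∪ S'), clsMarginAug f S S' = 0 :=
  nonlinear_augmentation_size_lower_bound_general S S' hSfin.isBounded hSlab hpos hneg hS'lab hcard
end

section
/- Let u₁,…,u_n, v₁,…,v_m be vectors in ℝ^d with n, m ≥ 1 and m < d. Suppose there exists a nonzero vector z ∈ ℝ^d such that ⟨u_i, z⟩ ≥ 0 for all i ∈ [n] and ⟨v_j, z⟩ ≥ 0 for all j ∈ [m]. Then there exists a nonzero vector z' ∈ ℝ^d such that ⟨u_i, z'⟩ ≥ 0 for all i ∈ [n], ⟨v_j, z'⟩ ≥ 0 for all j ∈ [m], and ⟨u_i, z'⟩ = 0 for some i ∈ [n]. -/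
open scoped RealInnerProductSpace ENNReal Classical
open Metric Set MeasureTheory

/-!
Let `C` be the cone cut out by the `v j`. If every `⟪u i, z⟫` is positive and `x ∈ C` satisfies
`⟪u k, x⟫ ≤ 0` for some `k`, then the ray from `x` in direction `z` stays in `C`, and the last
point at which it meets one of the hyperplanes `(u i)ᗮ` is the vector sought; it is nonzero as soon
as `x` is not a multiple of `z`.

Such an `x` exists because `C` contains a nonzero subspace `L`, namely `⋂ j, (v j)ᗮ`, but does not
lie in a line: if `L` is a line, then the `v j` are `d - 1 > 0` independent vectors, so they can all
be made positive at once. If `L` is not contained in the line through `z`, take `± w` for any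
`w ∈ L` off that line. Otherwise `L` is that line, and any `y ∈ C` off it may be translated along
it until `⟪u k, y⟫ = 0`.
-/

open Module Submodule

section LinearOrderedField

variable {𝕜 : Type*} [Field 𝕜] [LinearOrder 𝕜] [IsStrictOrderedRing 𝕜]

lemma exists_nonneg_add_mul_nonneg_and_eq_zero {ι : Type*} [Finite ι] {a b : ι → 𝕜}
    (hb : ∀ i, 0 < b i) (ha : ∃ i, a i ≤ 0) :
    ∃ t, 0 ≤ t ∧ (∀ i, 0 ≤ a i + t * b i) ∧ ∃ i, a i + t * b i = 0 := by
  obtain ⟨k, hk⟩ := ha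
  have : Nonempty ι := ⟨k⟩
  obtain ⟨i, hi⟩ := Finite.exists_max fun j ↦ -a j / b j
  refine ⟨-a i / b i, ?_, fun j ↦ ?_, i, ?_⟩
  · exact (div_nonneg (neg_nonneg.2 hk) (hb k).le).trans (hi k)
  · linarith [(div_le_iff₀ (hb j)).1 (hi j)]
  · rw [div_mul_cancel₀ _ (hb i).ne', add_neg_cancel]

end LinearOrderedField

section VectorSpace

variable {𝕜 E F : Type*} [DivisionRing 𝕜] [AddCommGroup E] [Module 𝕜 E]
  [AddCommGroup F] [Module 𝕜 F]

lemma mem_of_ne_bot_of_le_span_singleton {p : Submodule 𝕜 E} {z : E} (hp : p ≠ ⊥)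
    (h : p ≤ span 𝕜 {z}) : z ∈ p := by
  obtain ⟨x, hxp, hx⟩ := exists_mem_ne_zero_of_ne_bot hp
  obtain ⟨a, rfl⟩ := mem_span_singleton.1 (h hxp)
  exact (p.smul_mem_iff (left_ne_zero_of_smul hx)).1 hxp

variable [FiniteDimensional 𝕜 F] {A : E →ₗ[𝕜] F}

lemma ker_ne_bot_of_finrank_lt_rank (h : (finrank 𝕜 F : Cardinal) < Module.rank 𝕜 E) :
    LinearMap.ker A ≠ ⊥ := by
  intro hA
  have hle := A.lift_rank_le_of_injective (LinearMap.ker_eq_bot.1 hA)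
  rw [← finrank_eq_rank 𝕜 F, Cardinal.lift_natCast, Cardinal.lift_le_nat_iff] at hle
  exact h.not_ge hle

lemma surjective_of_ker_le_span_singleton {z : E}
    (h : (finrank 𝕜 F : Cardinal) < Module.rank 𝕜 E) (hA : LinearMap.ker A ≤ span 𝕜 {z}) :
    Function.Surjective A := by
  have : FiniteDimensional 𝕜 (LinearMap.ker A) := finiteDimensional_of_le hA
  have : FiniteDimensional 𝕜 (E ⧸ LinearMap.ker A) := A.quotKerEquivRange.symm.finiteDimensional
  have : FiniteDimensional 𝕜 E := .of_submodule_quotient (LinearMap.ker A)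
  rw [← finrank_eq_rank, Nat.cast_lt] at h
  have hker : finrank 𝕜 (LinearMap.ker A) ≤ 1 :=
    (Submodule.finrank_mono hA).trans (by simpa using finrank_span_le_card (R := 𝕜) {z})
  have hrange : finrank 𝕜 (LinearMap.range A) = finrank 𝕜 F := by
    have := A.finrank_range_add_finrank_ker
    have := (LinearMap.range A).finrank_le
    omega
  exact LinearMap.range_eq_top.1 (eq_top_of_finrank_eq hrange)

end VectorSpace

section Cone

variable {𝕜 E : Type*} [Field 𝕜] [LinearOrder 𝕜] [IsStrictOrderedRing 𝕜]
  [AddCommGroup E] [Module 𝕜 E]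

lemma exists_mem_cone_notMem_span_singleton_nonpos {C : PointedCone 𝕜 E} {z : E}
    (hlin : C.lineal ≠ ⊥) (hC : ¬ C ≤ span 𝕜 {z}) {φ : Dual 𝕜 E} (hφ : 0 < φ z) :
    ∃ x ∈ C, x ∉ span 𝕜 {z} ∧ φ x ≤ 0 := by
  by_cases hz : C.lineal ≤ span 𝕜 {z}
  · obtain ⟨y, hyC, hy⟩ := SetLike.not_le_iff_exists.1 hC
    have hzC : (φ y / φ z) • z ∈ C.lineal :=
      C.lineal.smul_mem _ (mem_of_ne_bot_of_le_span_singleton hlin hz)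
    refine ⟨y - (φ y / φ z) • z, ?_, ?_, ?_⟩
    · rw [sub_eq_add_neg]
      exact C.add_mem hyC hzC.2
    · rwa [sub_mem_iff_left _ (hz hzC)]
    · simp [hφ.ne']
  · obtain ⟨w, ⟨hwC, hnegwC⟩, hw⟩ := SetLike.not_le_iff_exists.1 hz
    rcases le_total (φ w) 0 with hφw | hφw
    · exact ⟨w, hwC, hw, hφw⟩
    · exact ⟨-w, hnegwC, by rwa [neg_mem_iff], by simpa using hφw⟩

theorem exists_mem_cone_ne_zero_nonneg_and_eq_zero {ι : Type*} [Finite ι] [Nonempty ι]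
    {C : PointedCone 𝕜 E} {u : ι → Dual 𝕜 E} {z : E} (hlin : C.lineal ≠ ⊥)
    (hC : ¬ C ≤ span 𝕜 {z}) (hz : z ≠ 0) (hzC : z ∈ C) (hu : ∀ i, 0 ≤ u i z) :
    ∃ z' ∈ C, z' ≠ 0 ∧ (∀ i, 0 ≤ u i z') ∧ ∃ i, u i z' = 0 := by
  by_cases hzero : ∃ i, u i z = 0
  · exact ⟨z, hzC, hz, hu, hzero⟩
  have hpos : ∀ i, 0 < u i z := fun i ↦ (hu i).lt_of_ne' (not_exists.1 hzero i)
  let k : ι := Classical.arbitrary ι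
  obtain ⟨x, hxC, hx, hkx⟩ := exists_mem_cone_notMem_span_singleton_nonpos hlin hC (hpos k)
  obtain ⟨t, ht, hnonneg, heq⟩ := exists_nonneg_add_mul_nonneg_and_eq_zero
    (a := fun i ↦ u i x) hpos ⟨k, hkx⟩
  refine ⟨x + t • z, C.add_mem hxC (C.smul_mem ht hzC), fun h ↦ hx ?_, ?_, ?_⟩
  · rw [eq_neg_of_add_eq_zero_left h]
    exact neg_mem (smul_mem _ t (mem_span_singleton_self z))
  · simpa using hnonneg
  · simpa using heq

lemma ker_le_lineal_comap_positive {F : Type*} [AddCommGroup F] [PartialOrder F]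
    [IsOrderedAddMonoid F] [Module 𝕜 F] [PosSMulMono 𝕜 F] (A : E →ₗ[𝕜] F) :
    LinearMap.ker A ≤ ((PointedCone.positive 𝕜 F).comap A).lineal := by
  intro x hx
  simp [LinearMap.mem_ker.1 hx]

variable {κ : Type*} [Fintype κ]

lemma not_comap_positive_le_span_singleton {A : E →ₗ[𝕜] κ → 𝕜}
    (hκ : (Fintype.card κ : Cardinal) < Module.rank 𝕜 E) (hE : 1 < Module.rank 𝕜 E) (z : E) :
    ¬ (PointedCone.positive 𝕜 (κ → 𝕜)).comap A ≤ span 𝕜 {z} := by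
  intro hC
  rw [← finrank_fintype_fun_eq_card 𝕜] at hκ
  have hker : LinearMap.ker A ≤ span 𝕜 {z} := fun x hx ↦
    hC (ker_le_lineal_comap_positive A hx).1
  have hzA : z ∈ LinearMap.ker A :=
    mem_of_ne_bot_of_le_span_singleton (ker_ne_bot_of_finrank_lt_rank hκ) hker
  -- The orthant spans `κ → 𝕜` and is covered by `A '' C ⊆ A '' span {z} = 0`; the all-ones vector
  -- suffices to see that `A = 0`.
  obtain ⟨y, hy⟩ := surjective_of_ker_le_span_singleton hκ hker 1
  have hyA : A y = 0 := (span_singleton_le_iff_mem z _).2 hzA (hC (by simp [hy]))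
  have htop : LinearMap.ker A = ⊤ := by
    refine eq_top_iff.2 fun x _ ↦ ?_
    rw [LinearMap.mem_ker, ← mul_one (A x), ← hy, hyA, mul_zero]
  have hrank : Module.rank 𝕜 E ≤ 1 := by
    rw [← rank_top, ← htop]
    exact (rank_mono hker).trans (by simpa using rank_span_le (R := 𝕜) {z})
  exact hE.not_ge hrank

theorem exists_nonzero_vector_orthogonal_to_some_u_general {ι : Type*} [Finite ι] [Nonempty ι]
    (hκ : (Fintype.card κ : Cardinal) < Module.rank 𝕜 E) (hE : 1 < Module.rank 𝕜 E)
    (u : ι → Dual 𝕜 E) (v : κ → Dual 𝕜 E) (z : E) (hz : z ≠ 0)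
    (hu : ∀ i, 0 ≤ u i z) (hv : ∀ j, 0 ≤ v j z) :
    ∃ z' : E, z' ≠ 0 ∧ (∀ i, 0 ≤ u i z') ∧ (∀ j, 0 ≤ v j z') ∧ ∃ i, u i z' = 0 := by
  let A : E →ₗ[𝕜] κ → 𝕜 := LinearMap.pi v
  have hker : LinearMap.ker A ≠ ⊥ := ker_ne_bot_of_finrank_lt_rank (by simpa using hκ)
  obtain ⟨z', hvz', hz', huz', hzero⟩ := exists_mem_cone_ne_zero_nonneg_and_eq_zero
    (ne_bot_of_le_ne_bot hker (ker_le_lineal_comap_positive A))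
    (not_comap_positive_le_span_singleton hκ hE z) hz hv hu
  exact ⟨z', hz', huz', hvz', hzero⟩

end Cone

/-- Lemma A.2 of the paper: if `m < d` and some nonzero `z` has
nonnegative inner product with all the `u i` and `v j`, then there is a nonzero `z'`
with nonnegative inner products which is moreover orthogonal to some `u i`. -/
theorem exists_nonzero_vector_orthogonal_to_some_u {d n m : ℕ}
    (hn : 1 ≤ n) (hm : 1 ≤ m) (hmd : m < d)
    (u : Fin n → Euc d) (v : Fin m → Euc d)
    (z : Euc d) (hz : z ≠ 0)
    (hu : ∀ i, 0 ≤ ⟪u i, z⟫) (hv : ∀ j, 0 ≤ ⟪v j, z⟫) :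
    ∃ z' : Euc d, z' ≠ 0 ∧ (∀ i, 0 ≤ ⟪u i, z'⟫) ∧ (∀ j, 0 ≤ ⟪v j, z'⟫) ∧
      ∃ i, ⟪u i, z'⟫ = 0 := by
  have : NeZero n := ⟨by omega⟩
  have hd : Module.rank ℝ (Euc d) = d := by simp [← finrank_eq_rank]
  exact exists_nonzero_vector_orthogonal_to_some_u_general (by simpa [hd])
    (by rw [hd]; exact_mod_cast hm.trans_lt hmd) (fun i ↦ innerₗ _ (u i))
    (fun j ↦ innerₗ _ (v j)) z hz hu hv
end

section
/- Let S ⊆ ℝ^d × {−1,+1} be a finite training set with X₊ and X₋ nonempty, and suppose R_ε(S) ≠ ∅. If 0 < r ≤ ε < d(X₊,X₋)/4, then for every artificial set S' ⊆ S_r, the set R_ε(S ∪ S') is nonempty. -/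
open scoped RealInnerProductSpace ENNReal Classical
open Metric Set MeasureTheory

/-!
A respectful classifier exists as soon as the small convex hulls of the two classes do not meet.
A point of the hull of `A` is no farther from the nearest point of `A` than any given centre is from
the farthest one, so its distance to `A` is at most the circumradius of `A`. With augmentation
radius `r`, the hulls of sets of circumradius at most `ε` therefore stay within `ε + r` of their own
class, and two of them with opposite labels can only meet if the classes are within `2 (ε + r)` of
each other.
-/

section InnerProductSpace

variable {E : Type*} [SeminormedAddCommGroup E] [InnerProductSpace ℝ E]

theorem convex_setOf_dist_lt_dist (c x : E) : Convex ℝ {y | dist y c < dist y x} := by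
  have dist_lt_iff (y : E) :
      dist y c < dist y x ↔ (‖c‖ ^ 2 - ‖x‖ ^ 2) / 2 < innerₛₗ ℝ (c - x) y := by
    rw [dist_eq_norm, dist_eq_norm, ← sq_lt_sq₀ (norm_nonneg _) (norm_nonneg _),
      norm_sub_sq_real, norm_sub_sq_real, innerₛₗ_apply_apply, inner_sub_left,
      real_inner_comm y, real_inner_comm y]
    constructor <;> intro h <;> linarith
  simp only [dist_lt_iff]
  exact convex_halfSpace_gt (innerₛₗ ℝ (c - x)).isLinear _

theorem exists_dist_le_dist_of_mem_convexHull {A : Set E} {x : E} (hx : x ∈ convexHull ℝ A)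
    (c : E) : ∃ a ∈ A, dist a x ≤ dist a c := by
  by_contra! h
  have hxc : dist x c < dist x x := convexHull_min h (convex_setOf_dist_lt_dist c x) hx
  exact (dist_self x ▸ hxc).not_ge dist_nonneg

end InnerProductSpace

theorem setOf_infDist_le_subset_cthickening {α : Type*} [PseudoMetricSpace α] {P : Set α}
    (hP : P.Nonempty) (r : ℝ) : {x | infDist x P ≤ r} ⊆ cthickening r P := fun _ hx =>
  (ENNReal.le_ofReal_iff_toReal_le (infEDist_ne_top hP) (infDist_nonneg.trans hx)).2 hx

section Euc

variable {d : ℕ}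

theorem infEDist_le_circumradius_of_mem_convexHull {A : Set (Euc d)} {x : Euc d}
    (hx : x ∈ convexHull ℝ A) : infEDist x A ≤ circumradius A := by
  refine le_iInf fun c => ?_
  obtain ⟨a, ha, hxa⟩ := exists_dist_le_dist_of_mem_convexHull hx c
  calc
    infEDist x A ≤ edist x a := infEDist_le_edist_of_mem ha
    _ = edist a x := edist_comm x a
    _ ≤ edist a c := by simpa only [edist_dist] using ENNReal.ofReal_le_ofReal hxa
    _ = edist c a := edist_comm a c
    _ ≤ ⨆ y ∈ A, edist c y := le_iSup₂ (f := fun y (_ : y ∈ A) => edist c y) a ha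

theorem setSepDist_le_infEDist_add_infEDist (P Q : Set (Euc d)) (x : Euc d) :
    setSepDist P Q ≤ infEDist x P + infEDist x Q := by
  rw [infEDist, ENNReal.iInf₂_add]
  refine iInf₂_mono fun p _ => ?_
  rw [edist_comm]
  exact infEDist_le_edist_add_infEDist

/-- The `ε`-hull of `X`: the union of the convex hulls of the subsets of `X` of circumradius at
most `ε`. It is the region on which an `ε`-respectful classifier is forced to take the label
of `X`. -/
def respectfulHull (ε : ℝ≥0∞) (X : Set (Euc d)) : Set (Euc d) :=
  {x | ∃ A ⊆ X, circumradius A ≤ ε ∧ x ∈ convexHull ℝ A}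

theorem respectfulHull_mono {ε : ℝ≥0∞} {X Y : Set (Euc d)} (h : X ⊆ Y) :
    respectfulHull ε X ⊆ respectfulHull ε Y :=
  fun _ ⟨A, hAX, hA⟩ => ⟨A, hAX.trans h, hA⟩

theorem infEDist_le_of_mem_respectfulHull {ε : ℝ≥0∞} {X : Set (Euc d)} {x : Euc d}
    (hx : x ∈ respectfulHull ε X) : infEDist x X ≤ ε := by
  obtain ⟨A, hAX, hA, hxA⟩ := hx
  exact (infEDist_anti hAX).trans <|
    (infEDist_le_circumradius_of_mem_convexHull hxA).trans hA

theorem infEDist_le_of_mem_respectfulHull_cthickening {ε : ℝ≥0∞} {r : ℝ} {P : Set (Euc d)}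
    {x : Euc d} (hx : x ∈ respectfulHull ε (cthickening r P)) :
    infEDist x P ≤ ε + ENNReal.ofReal r :=
  infEDist_le_infEDist_cthickening_add.trans
    (add_le_add_left (infEDist_le_of_mem_respectfulHull hx) _)

theorem disjoint_respectfulHull_cthickening {ε : ℝ≥0∞} {r : ℝ} {P Q : Set (Euc d)}
    (h : 2 * (ε + ENNReal.ofReal r) < setSepDist P Q) :
    Disjoint (respectfulHull ε (cthickening r P)) (respectfulHull ε (cthickening r Q)) := by
  refine disjoint_left.2 fun x hxP hxQ => h.not_ge ?_
  calc
    setSepDist P Q ≤ infEDist x P + infEDist x Q := setSepDist_le_infEDist_add_infEDist P Q x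
    _ ≤ (ε + ENNReal.ofReal r) + (ε + ENNReal.ofReal r) :=
      add_le_add (infEDist_le_of_mem_respectfulHull_cthickening hxP)
        (infEDist_le_of_mem_respectfulHull_cthickening hxQ)
    _ = 2 * (ε + ENNReal.ofReal r) := (two_mul _).symm

theorem respectfulOf_iff_eqOn_respectfulHull {ε : ℝ≥0∞} {f : Euc d → ℝ} {T : Set (Euc d × ℝ)} :
    RespectfulOf ε f T ↔ EqOn f 1 (respectfulHull ε (posPts T)) ∧
      EqOn f (-1) (respectfulHull ε (negPts T)) := by
  have forall_iff (X : Set (Euc d)) (y : ℝ) :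
      (∀ A ⊆ X, circumradius A ≤ ε → ∀ x ∈ convexHull ℝ A, f x = y) ↔
        ∀ x ∈ respectfulHull ε X, f x = y :=
    ⟨fun h x ⟨A, hAX, hA, hx⟩ => h A hAX hA x hx,
      fun h A hAX hA x hx => h x ⟨A, hAX, hA, hx⟩⟩
  exact and_congr (forall_iff _ 1) (forall_iff _ (-1))

theorem respectfulSet_nonempty_iff_disjoint {ε : ℝ≥0∞} {T : Set (Euc d × ℝ)} :
    (respectfulSet ε T).Nonempty ↔
      Disjoint (respectfulHull ε (posPts T)) (respectfulHull ε (negPts T)) := by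
  constructor
  · rintro ⟨f, -, hf⟩
    obtain ⟨hpos, hneg⟩ := respectfulOf_iff_eqOn_respectfulHull.1 hf
    refine disjoint_left.2 fun x hxpos hxneg => ?_
    have : (1 : ℝ) = -1 := (hpos hxpos).symm.trans (hneg hxneg)
    norm_num at this
  · intro h
    refine ⟨(respectfulHull ε (posPts T)).piecewise 1 (-1), fun _ => ?_,
      respectfulOf_iff_eqOn_respectfulHull.2 ⟨piecewise_eqOn _ _ _, ?_⟩⟩
    · exact (em _).imp (piecewise_eqOn _ _ _ ·) (piecewise_eqOn_compl _ _ _ ·)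
    · exact (piecewise_eqOn_compl _ _ _).mono h.subset_compl_left

theorem posPts_union_subset_cthickening {S S' : Set (Euc d × ℝ)} {r : ℝ}
    (hpos : (posPts S).Nonempty) (hS' : S' ⊆ ballAug S r) :
    posPts (S ∪ S') ⊆ cthickening r (posPts S) := by
  refine union_subset (self_subset_cthickening _) fun x hx => ?_
  obtain ⟨-, h⟩ | ⟨h, -⟩ := hS' hx
  · exact setOf_infDist_le_subset_cthickening hpos r h
  · norm_num at h

theorem negPts_union_subset_cthickening {S S' : Set (Euc d × ℝ)} {r : ℝ}
    (hneg : (negPts S).Nonempty) (hS' : S' ⊆ ballAug S r) :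
    negPts (S ∪ S') ⊆ cthickening r (negPts S) := by
  refine union_subset (self_subset_cthickening _) fun x hx => ?_
  obtain ⟨h, -⟩ | ⟨-, h⟩ := hS' hx
  · norm_num at h
  · exact setOf_infDist_le_subset_cthickening hneg r h

theorem respectful_set_nonempty_of_bounded_augmentation_general {S : Set (Euc d × ℝ)}
    (hpos : (posPts S).Nonempty) (hneg : (negPts S).Nonempty) {ε : ℝ≥0∞} {r : ℝ}
    (h : 2 * (ε + ENNReal.ofReal r) < setSepDist (posPts S) (negPts S)) :
    ∀ S' ⊆ ballAug S r, (respectfulSet ε (S ∪ S')).Nonempty := fun _ hS' =>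
  respectfulSet_nonempty_iff_disjoint.2 <| (disjoint_respectfulHull_cthickening h).mono
    (respectfulHull_mono (posPts_union_subset_cthickening hpos hS'))
    (respectfulHull_mono (negPts_union_subset_cthickening hneg hS'))

end Euc

/-- Lemma A.5 of the paper: if `R_ε(S) ≠ ∅` and
`0 < r ≤ ε < d(X₊,X₋)/4`, then for every `S' ⊆ S_r` the set `R_ε(S ∪ S')` is
nonempty. -/
theorem respectful_set_nonempty_of_bounded_augmentation {d : ℕ}
    (S : Set (Euc d × ℝ)) (hSfin : S.Finite) (hSlab : LabelsPM S)
    (hpos : (posPts S).Nonempty) (hneg : (negPts S).Nonempty)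
    (ε : ℝ≥0∞) (hne : (respectfulSet ε S).Nonempty)
    (r : ℝ) (hr : 0 < r) (hrε : ENNReal.ofReal r ≤ ε)
    (hεd : ε < setSepDist (posPts S) (negPts S) / 4) :
    ∀ S' ⊆ ballAug S r, (respectfulSet ε (S ∪ S')).Nonempty := by
  refine respectful_set_nonempty_of_bounded_augmentation_general hpos hneg ?_
  calc
    2 * (ε + ENNReal.ofReal r) ≤ 2 * (ε + ε) := by gcongr
    _ = ε * 4 := by ring
    _ < setSepDist (posPts S) (negPts S) :=
      (ENNReal.lt_div_iff_mul_lt (by norm_num) (by norm_num)).1 hεd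
end
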